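/- arXiv:1007.4633 — 5 statements merged into one kernel-verified Lean document; each statement's English description precedes it below -/
import Mathlib

section
/- For every λ < 0, (1/(2π)) ∫_{-∞}^∞ e^{-iλu} / log(-iu) du = -e^{λ}, where log denotes the principal branch of the complex logarithm and the integral is understood as an improper Riemann integral along the real axis. -/
open Filter Complex

/-- The inverse of the principal logarithm is continuous on the closed right half plane away from
`1`; at the origin this uses the convention `(log 0)⁻¹ = 0`. -/
lemma continuousAt_inv_log {z : ℂ} (hz : 0 ≤ z.re) (h1 : z ≠ 1) :
    ContinuousAt (fun w : ℂ => (log w)⁻¹) z := by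
  by_cases h0 : z = 0
  · subst h0
    rw [continuousAt_iff_punctured_nhds, log_zero, inv_zero]
    refine tendsto_inv₀_cobounded.comp ?_
    rw [← tendsto_norm_atTop_iff_cobounded]
    have hnorm : Tendsto (fun w : ℂ => ‖w‖) (nhdsWithin 0 {0}ᶜ) (nhdsWithin 0 (Set.Ioi 0)) :=
      tendsto_norm_nhdsNE_zero
    refine tendsto_atTop_mono (fun w => ?_)
      (tendsto_abs_atBot_atTop.comp (Real.tendsto_log_nhdsGT_zero.comp hnorm))
    simpa only [Function.comp, log_re] using abs_re_le_norm (log w)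
  · have hs : z ∈ slitPlane := by
      rw [mem_slitPlane_iff]
      by_contra! hc
      exact h0 (Complex.ext (le_antisymm hc.1 hz) hc.2)
    refine (continuousAt_clog hs).inv₀ fun hlog => h1 ?_
    rw [← exp_log h0, hlog, Complex.exp_zero]

/-- The function `e^{λz} / log z` minus the rational function `2 e^λ / (z² - 1)`, which has the
same residue at `1`. -/
noncomputable def regularizedIntegrand (lam : ℝ) (z : ℂ) : ℂ :=
  exp (lam * z) / log z - 2 * exp lam / (z ^ 2 - 1)

lemma sq_sub_one_ne_zero {z : ℂ} (hz : 0 ≤ z.re) (h1 : z ≠ 1) : z ^ 2 - 1 ≠ 0 := by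
  intro h
  have h' : (z - 1) * (z + 1) = 0 := by linear_combination h
  rcases mul_eq_zero.1 h' with h2 | h2
  · exact h1 (sub_eq_zero.1 h2)
  · have := congrArg re h2
    simp at this
    linarith

lemma continuousAt_regularizedIntegrand (lam : ℝ) {z : ℂ} (hz : 0 ≤ z.re) (h1 : z ≠ 1) :
    ContinuousAt (regularizedIntegrand lam) z := by
  have hlog := continuousAt_inv_log hz h1
  have hexp : ContinuousAt (fun w : ℂ => exp (lam * w)) z := by fun_prop
  have hrat : ContinuousAt (fun w : ℂ => 2 * exp lam / (w ^ 2 - 1)) z :=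
    continuousAt_const.div (by fun_prop) (sq_sub_one_ne_zero hz h1)
  exact (hexp.mul hlog).sub hrat

lemma dslope_log_one_ne_zero {z : ℂ} (hz : z ≠ 0) : dslope log 1 z ≠ 0 := by
  by_cases h1 : z = 1
  · subst h1
    rw [dslope_same, (hasDerivAt_log one_mem_slitPlane).deriv]
    simp
  · rw [dslope_of_ne _ h1, slope_def_field, log_one, sub_zero]
    refine div_ne_zero (fun hlog => h1 ?_) (sub_ne_zero.2 h1)
    rw [← exp_log hz, hlog, Complex.exp_zero]

lemma differentiableOn_sub_one_mul_regularizedIntegrand (lam : ℝ) :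
    DifferentiableOn ℂ (fun z => (z - 1) * regularizedIntegrand lam z) {z | 0 < z.re} := by
  have hopen : IsOpen {z : ℂ | 0 < z.re} := isOpen_lt continuous_const continuous_re
  have hmem : {z : ℂ | 0 < z.re} ∈ nhds (1 : ℂ) := hopen.mem_nhds (by simp)
  have hne : ∀ z ∈ {z : ℂ | 0 < z.re}, z ≠ 0 := by
    rintro z hz rfl
    simp at hz
  have hlog : DifferentiableOn ℂ (dslope log 1) {z : ℂ | 0 < z.re} :=
    (differentiableOn_dslope hmem).2 fun z hz =>
      (differentiableAt_log (Or.inl hz)).differentiableWithinAt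
  have hexp : DifferentiableOn ℂ (fun z : ℂ => exp (lam * z)) {z : ℂ | 0 < z.re} := by fun_prop
  have hadd : ∀ z ∈ {z : ℂ | 0 < z.re}, z + 1 ≠ 0 := by
    intro z hz h
    have := congrArg re h
    simp at this hz
    linarith
  have hrat : DifferentiableOn ℂ (fun z : ℂ => 2 * exp lam / (z + 1)) {z : ℂ | 0 < z.re} :=
    (differentiableOn_const _).div (by fun_prop) hadd
  refine ((hexp.div hlog fun z hz => dslope_log_one_ne_zero (hne z hz)).sub hrat).congr ?_
  intro z hz
  by_cases h1 : z = 1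
  · subst h1
    simp only [Pi.sub_apply, Pi.div_apply, dslope_same,
      (hasDerivAt_log one_mem_slitPlane).deriv]
    norm_num
  · have hz1 := sub_ne_zero.2 h1
    have hz2 := hadd z hz
    have hz3 := dslope_log_one_ne_zero (hne z hz)
    simp only [Pi.sub_apply, Pi.div_apply, regularizedIntegrand]
    rw [dslope_of_ne _ h1, slope_def_field, log_one, sub_zero] at hz3 ⊢
    have hl : log z ≠ 0 := fun h => hz3 (by simp [h])
    have hfac : z ^ 2 - 1 = (z - 1) * (z + 1) := by ring
    rw [hfac]
    field_simp

lemma integral_boundary_regularizedIntegrand (lam : ℝ) {T : ℝ} (hT : 1 < T) :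
    (∫ x in (0 : ℝ)..T, regularizedIntegrand lam (x - T * I)) -
      (∫ x in (0 : ℝ)..T, regularizedIntegrand lam (x + T * I)) +
      I * (∫ y in (-T)..T, regularizedIntegrand lam (T + y * I)) -
      I * (∫ y in (-T)..T, regularizedIntegrand lam (y * I)) = 0 := by
  set P : ℂ → ℂ := fun z => (z - 1) * regularizedIntegrand lam z with hP
  have hopen : IsOpen {z : ℂ | 0 < z.re} := isOpen_lt continuous_const continuous_re
  have hmem : {z : ℂ | 0 < z.re} ∈ nhds (1 : ℂ) := hopen.mem_nhds (by simp)
  have hslope : ∀ z, z ≠ 1 → dslope P 1 z = regularizedIntegrand lam z := by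
    intro z hz
    rw [dslope_of_ne _ hz, slope_def_field]
    simp only [hP, sub_self, zero_mul, sub_zero]
    exact mul_div_cancel_left₀ _ (sub_ne_zero.2 hz)
  have hdiff : DifferentiableOn ℂ (dslope P 1) {z : ℂ | 0 < z.re} :=
    (differentiableOn_dslope hmem).2 (differentiableOn_sub_one_mul_regularizedIntegrand lam)
  have hcont : ∀ z : ℂ, 0 ≤ z.re → ContinuousAt (dslope P 1) z := by
    intro z hz
    by_cases h1 : z = 1
    · subst h1
      exact (hdiff.differentiableAt hmem).continuousAt
    · refine (continuousAt_regularizedIntegrand lam hz h1).congr ?_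
      filter_upwards [isOpen_ne.mem_nhds h1] with w hw using (hslope w hw).symm
  have hT0 : 0 ≤ T := by linarith
  have key := integral_boundary_rect_eq_zero_of_continuousOn_of_differentiableOn
    (dslope P 1) (⟨0, -T⟩ : ℂ) (⟨T, T⟩ : ℂ)
    (fun z hz => (hcont z (by
      have := hz.1
      simp only [Set.mem_preimage, Set.uIcc_of_le hT0] at this
      exact this.1)).continuousWithinAt)
    (hdiff.mono fun z hz => by
      have := hz.1
      simp only [Set.mem_preimage, min_eq_left hT0] at this
      exact this.1)
  have him : ∀ x y : ℝ, (x + y * I : ℂ) = 1 → x = 1 ∧ y = 0 := by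
    intro x y h
    exact ⟨by simpa using congrArg re h, by simpa using congrArg im h⟩
  have e1 : ∀ x : ℝ, dslope P 1 (x + (-T : ℝ) * I) = regularizedIntegrand lam (x - T * I) := by
    intro x
    rw [hslope _ fun h => by linarith [(him _ _ h).2]]
    congr 1
    push_cast
    ring
  have e2 : ∀ x : ℝ, dslope P 1 (x + T * I) = regularizedIntegrand lam (x + T * I) := by
    intro x
    rw [hslope _ fun h => by linarith [(him _ _ h).2]]
  have e3 : ∀ y : ℝ, dslope P 1 (T + y * I) = regularizedIntegrand lam (T + y * I) := by
    intro y
    rw [hslope _ fun h => by linarith [(him _ _ h).1]]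
  have e4 : ∀ y : ℝ, dslope P 1 ((0 : ℝ) + y * I) = regularizedIntegrand lam (y * I) := by
    intro y
    rw [hslope _ fun h => by linarith [(him _ _ h).1]]
    congr 1
    simp
  simpa only [e1, e2, e3, e4, smul_eq_mul] using key

lemma norm_regularizedIntegrand_le (lam : ℝ) {T : ℝ} (hT : 1 < T) {z : ℂ} (hz : T ≤ ‖z‖) :
    ‖regularizedIntegrand lam z‖ ≤
      Real.exp (lam * z.re) / Real.log T + 2 * Real.exp lam / (T ^ 2 - 1) := by
  have hlogT : 0 < Real.log T := Real.log_pos hT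
  have hlog : Real.log T ≤ ‖log z‖ := by
    refine (Real.log_le_log (by linarith) hz).trans ?_
    rw [← log_re]
    exact re_le_norm _
  have hsq : T ^ 2 - 1 ≤ ‖z ^ 2 - 1‖ := by
    have h := norm_sub_norm_le (z ^ 2) 1
    rw [norm_pow, norm_one] at h
    nlinarith
  have hpos : 0 < T ^ 2 - 1 := by nlinarith
  refine (norm_sub_le _ _).trans (add_le_add ?_ ?_)
  · rw [norm_div, norm_exp, re_ofReal_mul]
    gcongr
  · rw [norm_div, norm_mul, norm_exp, ofReal_re, norm_ofNat]
    gcongr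

lemma norm_integral_horizontal_le {lam : ℝ} (hlam : lam < 0) {T : ℝ} (hT : 1 < T) {s : ℝ}
    (hs : |s| = T) :
    ‖∫ x in (0 : ℝ)..T, regularizedIntegrand lam (x + s * I)‖ ≤
      (-lam)⁻¹ / Real.log T + T * (2 * Real.exp lam / (T ^ 2 - 1)) := by
  have hlogT : 0 < Real.log T := Real.log_pos hT
  have hint : IntervalIntegrable (fun x : ℝ => Real.exp (lam * x) / Real.log T)
      MeasureTheory.volume 0 T := (by fun_prop : Continuous _).intervalIntegrable _ _
  have h1 : ‖∫ x in (0 : ℝ)..T, regularizedIntegrand lam (x + s * I)‖ ≤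
      ∫ x in (0 : ℝ)..T,
        (Real.exp (lam * x) / Real.log T + 2 * Real.exp lam / (T ^ 2 - 1)) := by
    refine intervalIntegral.norm_integral_le_of_norm_le (by linarith) (.of_forall fun x _ => ?_)
      (hint.add intervalIntegrable_const)
    have hb : T ≤ ‖(x + s * I : ℂ)‖ := by
      have := abs_im_le_norm (x + s * I : ℂ)
      simpa [hs] using this
    simpa using norm_regularizedIntegrand_le lam hT hb
  refine h1.trans ?_
  rw [intervalIntegral.integral_add hint intervalIntegrable_const,
    intervalIntegral.integral_div, intervalIntegral.integral_const, smul_eq_mul, sub_zero,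
    intervalIntegral.integral_comp_mul_left (fun x => Real.exp x) hlam.ne, integral_exp,
    smul_eq_mul]
  gcongr
  rw [mul_zero, Real.exp_zero, inv_neg]
  have hinv : lam⁻¹ < 0 := inv_lt_zero.2 hlam
  nlinarith [Real.exp_pos (lam * T)]

lemma norm_integral_vertical_le (lam : ℝ) {T : ℝ} (hT : 1 < T) :
    ‖∫ y in (-T)..T, regularizedIntegrand lam (T + y * I)‖ ≤
      (Real.exp (lam * T) / Real.log T + 2 * Real.exp lam / (T ^ 2 - 1)) * (2 * T) := by
  have h := intervalIntegral.norm_integral_le_of_norm_le_const (a := -T) (b := T)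
    (f := fun y : ℝ => regularizedIntegrand lam (T + y * I))
    (C := Real.exp (lam * T) / Real.log T + 2 * Real.exp lam / (T ^ 2 - 1)) fun y _ => by
      have hb : T ≤ ‖(T + y * I : ℂ)‖ := by
        have := re_le_norm (T + y * I : ℂ)
        simpa using this
      simpa using norm_regularizedIntegrand_le lam hT hb
  rwa [show |T - -T| = 2 * T by rw [abs_of_pos] <;> linarith] at h

lemma tendsto_integral_regularizedIntegrand {lam : ℝ} (hlam : lam < 0) :
    Tendsto (fun T : ℝ => ∫ y in (-T)..T, regularizedIntegrand lam (y * I)) atTop (nhds 0) := by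
  have hlog : Tendsto (fun T : ℝ => (Real.log T)⁻¹) atTop (nhds 0) :=
    tendsto_inv_atTop_zero.comp Real.tendsto_log_atTop
  have hrat : Tendsto (fun T : ℝ => T / (T ^ 2 - 1)) atTop (nhds 0) := by
    have h1 : Tendsto (fun T : ℝ => T⁻¹) atTop (nhds 0) := tendsto_inv_atTop_zero
    have h2 : Tendsto (fun T : ℝ => T⁻¹ / (1 - T⁻¹ ^ 2)) atTop (nhds (0 / (1 - 0 ^ 2))) :=
      h1.div (tendsto_const_nhds.sub (h1.pow 2)) (by norm_num)
    rw [zero_div] at h2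
    refine h2.congr' ?_
    filter_upwards [eventually_gt_atTop 1] with T hT
    have hT0 : T ≠ 0 := by positivity
    have hT1 : T ^ 2 - 1 ≠ 0 := by nlinarith
    field_simp
  have hexp : Tendsto (fun T : ℝ => T * Real.exp (lam * T)) atTop (nhds 0) := by
    simpa using tendsto_rpow_mul_exp_neg_mul_atTop_nhds_zero 1 (-lam) (by linarith)
  have hbound : Tendsto (fun T : ℝ => 2 * ((-lam)⁻¹ * (Real.log T)⁻¹) +
      8 * Real.exp lam * (T / (T ^ 2 - 1)) +
      2 * ((T * Real.exp (lam * T)) * (Real.log T)⁻¹)) atTop (nhds 0) := by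
    simpa using (((hlog.const_mul (-lam)⁻¹).const_mul 2).add
      (hrat.const_mul (8 * Real.exp lam))).add ((hexp.mul hlog).const_mul 2)
  refine squeeze_zero_norm' ?_ hbound
  filter_upwards [eventually_gt_atTop 1] with T hT
  have hTabs : |T| = T := abs_of_pos (by linarith)
  have key := integral_boundary_regularizedIntegrand lam hT
  have hb := norm_integral_horizontal_le hlam hT (s := -T) (by rw [abs_neg, hTabs])
  simp only [ofReal_neg, neg_mul, ← sub_eq_add_neg] at hb
  have ht := norm_integral_horizontal_le hlam hT hTabs
  have hr := norm_integral_vertical_le lam hT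
  set B := ∫ x in (0 : ℝ)..T, regularizedIntegrand lam (x - T * I)
  set A := ∫ x in (0 : ℝ)..T, regularizedIntegrand lam (x + T * I)
  set R := ∫ y in (-T)..T, regularizedIntegrand lam (T + y * I)
  set L := ∫ y in (-T)..T, regularizedIntegrand lam (y * I)
  have hL : ‖L‖ ≤ ‖B‖ + ‖A‖ + ‖R‖ := by
    have h : I * L = B - A + I * R := by linear_combination -key
    calc ‖L‖ = ‖I * L‖ := by simp
      _ = ‖B - A + I * R‖ := by rw [h]
      _ ≤ ‖B - A‖ + ‖I * R‖ := norm_add_le _ _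
      _ ≤ ‖B‖ + ‖A‖ + ‖R‖ := by
        gcongr
        · exact norm_sub_le _ _
        · simp
  calc ‖L‖ ≤ _ := hL.trans (add_le_add (add_le_add hb ht) hr)
    _ = _ := by ring

lemma integral_exp_div_log_eq (lam T : ℝ) :
    (∫ u in (-T)..T, exp (-I * lam * u) / log (-I * u)) =
      (∫ y in (-T)..T, regularizedIntegrand lam (y * I)) - 4 * exp lam * Real.arctan T := by
  have hne : ∀ y : ℝ, (y * I : ℂ) ≠ 1 := fun y h => by simpa using congrArg re h
  have hcont : Continuous fun y : ℝ => regularizedIntegrand lam (y * I) := by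
    refine continuous_iff_continuousAt.2 fun y => ?_
    exact ContinuousAt.comp (f := fun y : ℝ => (y * I : ℂ))
      (continuousAt_regularizedIntegrand lam (by simp) (hne y)) (by fun_prop)
  have hrat : Continuous fun y : ℝ => ((1 / (1 + y ^ 2) : ℝ) : ℂ) :=
    continuous_ofReal.comp (continuous_const.div (by fun_prop) fun y => by positivity)
  have hneg := intervalIntegral.integral_comp_neg (a := -T) (b := T)
    (fun y : ℝ => exp (lam * (y * I)) / log (y * I))
  have hsub : (∫ u in (-T)..T, exp (-I * lam * u) / log (-I * u)) =
      ∫ y in (-T)..T, exp (lam * (y * I)) / log (y * I) := by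
    rw [neg_neg] at hneg
    rw [← hneg]
    refine intervalIntegral.integral_congr fun u _ => ?_
    simp only [ofReal_neg]
    congr 2 <;> ring
  have hpt : ∀ y : ℝ, exp (lam * (y * I)) / log (y * I) =
      regularizedIntegrand lam (y * I) - 2 * exp lam * ((1 / (1 + y ^ 2) : ℝ) : ℂ) := by
    intro y
    have hy : (1 + y ^ 2 : ℂ) ≠ 0 := by exact_mod_cast (by positivity : (1 + y ^ 2 : ℝ) ≠ 0)
    have hsq : (y * I : ℂ) ^ 2 - 1 = -(1 + y ^ 2) := by
      rw [mul_pow, I_sq]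
      ring
    simp only [regularizedIntegrand, hsq]
    push_cast
    field_simp
    ring
  rw [hsub]
  simp only [hpt]
  rw [intervalIntegral.integral_sub (hcont.intervalIntegrable _ _)
    ((hrat.intervalIntegrable _ _).const_mul _), intervalIntegral.integral_const_mul,
    intervalIntegral.integral_ofReal, integral_one_div_one_add_sq, Real.arctan_neg]
  push_cast
  ring

theorem stmt11 (lam : ℝ) (hlam : lam < 0) :
    Tendsto
      (fun T : ℝ => (1 / (2 * Real.pi) : ℂ) *
        ∫ u in (-T : ℝ)..T,
          Complex.exp (-Complex.I * lam * u) / Complex.log (-Complex.I * u))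
      atTop (nhds (-Complex.exp lam)) := by
  simp only [integral_exp_div_log_eq]
  have harctan : Tendsto (fun T : ℝ => (Real.arctan T : ℂ)) atTop
      (nhds ((Real.pi / 2 : ℝ) : ℂ)) :=
    (continuous_ofReal.tendsto _).comp
      (Real.tendsto_arctan_atTop.mono_right nhdsWithin_le_nhds)
  have h := ((tendsto_integral_regularizedIntegrand hlam).sub
    (harctan.const_mul (4 * exp lam))).const_mul (1 / (2 * Real.pi) : ℂ)
  convert h using 2
  have hpi : (Real.pi : ℂ) ≠ 0 := by exact_mod_cast Real.pi_ne_zero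
  push_cast
  field_simp
  ring
end

section
/- For every λ > 0, (1/(2π)) ∫_{-∞}^∞ e^{-iλu} / log(-iu) du = W(λ) := ∫_0^∞ e^{-λu} / ((log u)² + π²) du, where log is the principal branch and the left-hand integral is an improper Riemann integral. -/
open Filter Complex

noncomputable def W (lam : ℝ) : ℝ :=
  ∫ u in Set.Ioi (0 : ℝ), Real.exp (-lam * u) / ((Real.log u) ^ 2 + Real.pi ^ 2)

/-- The integrand of `∫ exp (lam * z) / log z dz` along the ray `z = r * exp (θ * I)`. -/
noncomputable def rayIntegrand (lam θ r : ℝ) : ℂ :=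
  exp (lam * r * exp (θ * I)) * exp (θ * I) / (Real.log r + θ * I)

/-- The integrand of `∫ exp (lam * z) / log z dz` after the substitution `z = exp w`. -/
noncomputable def logIntegrand (lam : ℝ) (w : ℂ) : ℂ :=
  exp (lam * exp w) * exp w / w

theorem logIntegrand_eq_rayIntegrand (lam θ s : ℝ) :
    logIntegrand lam (s + θ * I) = Real.exp s • rayIntegrand lam θ (Real.exp s) := by
  rw [logIntegrand, rayIntegrand, exp_add, Real.log_exp, real_smul, ofReal_exp, ← mul_assoc]
  ring_nf

theorem add_mul_I_ne_zero {s θ : ℝ} (h : s ≠ 0 ∨ θ ≠ 0) : (s : ℂ) + θ * I ≠ 0 := by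
  intro h0
  have h1 := congrArg re h0
  have h2 := congrArg im h0
  simp at h1 h2
  tauto

theorem measurable_rayIntegrand (lam θ : ℝ) : Measurable (rayIntegrand lam θ) := by
  unfold rayIntegrand
  fun_prop

theorem continuousOn_rayIntegrand (lam : ℝ) {θ : ℝ} (hθ : θ ≠ 0) :
    ContinuousOn (rayIntegrand lam θ) (Set.Ioi 0) := by
  unfold rayIntegrand
  refine ContinuousOn.div (by fun_prop) ?_ fun r _ => add_mul_I_ne_zero (Or.inr hθ)
  refine ContinuousOn.add ?_ continuousOn_const
  exact continuous_ofReal.comp_continuousOn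
    (Real.continuousOn_log.mono fun r hr => (ne_of_gt hr : r ≠ 0))

theorem norm_rayIntegrand_le (lam r : ℝ) {θ : ℝ} (hθ : θ ≠ 0) :
    ‖rayIntegrand lam θ r‖ ≤ Real.exp (lam * r * Real.cos θ) / |θ| := by
  have h : |θ| ≤ ‖(Real.log r : ℂ) + θ * I‖ := by
    simpa using abs_im_le_norm ((Real.log r : ℂ) + θ * I)
  rw [rayIntegrand, norm_div, norm_mul, norm_exp_ofReal_mul_I, mul_one, norm_exp]
  have : ((lam : ℂ) * r * exp (θ * I)).re = lam * r * Real.cos θ := by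
    rw [← ofReal_mul, re_ofReal_mul, exp_ofReal_mul_I_re]
  rw [this]
  have := abs_pos.2 hθ
  gcongr

theorem norm_rayIntegrand_le_inv {lam r θ : ℝ} (hlam : 0 ≤ lam) (hr : 0 ≤ r) (hθ : θ ≠ 0)
    (hcos : Real.cos θ ≤ 0) : ‖rayIntegrand lam θ r‖ ≤ |θ|⁻¹ := by
  refine (norm_rayIntegrand_le lam r hθ).trans ?_
  rw [← one_div]
  gcongr
  exact Real.exp_le_one_iff.2 (mul_nonpos_of_nonneg_of_nonpos (by positivity) hcos)

theorem intervalIntegrable_rayIntegrand {lam θ a b : ℝ} (hlam : 0 ≤ lam) (ha : 0 ≤ a)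
    (hb : 0 ≤ b) (hθ : θ ≠ 0) (hcos : Real.cos θ ≤ 0) :
    IntervalIntegrable (rayIntegrand lam θ) MeasureTheory.volume a b := by
  refine (intervalIntegrable_const (c := |θ|⁻¹)).mono_fun
    (measurable_rayIntegrand lam θ).aestronglyMeasurable ?_
  refine (MeasureTheory.ae_restrict_iff' measurableSet_uIoc).2 (Eventually.of_forall ?_)
  intro r hr
  rw [Real.norm_of_nonneg (by positivity)]
  refine norm_rayIntegrand_le_inv hlam ?_ hθ hcos
  exact (le_min ha hb).trans hr.1.le

theorem integral_logIntegrand_horizontal (lam : ℝ) {θ T : ℝ} (hθ : θ ≠ 0) (hT : 0 < T) :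
    ∫ s in (-Real.log T)..Real.log T, logIntegrand lam (s + θ * I) =
      ∫ r in T⁻¹..T, rayIntegrand lam θ r := by
  have h := intervalIntegral.integral_deriv_smul_comp' (a := -Real.log T) (b := Real.log T)
    (f := Real.exp) (f' := Real.exp) (g := rayIntegrand lam θ)
    (fun x _ => Real.hasDerivAt_exp x) Real.continuous_exp.continuousOn
    ((continuousOn_rayIntegrand lam hθ).mono (by
      rintro _ ⟨x, -, rfl⟩
      exact Real.exp_pos x))
  rw [Real.exp_neg, Real.exp_log hT] at h
  rw [← h]
  simp only [logIntegrand_eq_rayIntegrand, Function.comp]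

theorem differentiableAt_logIntegrand (lam : ℝ) {w : ℂ} (hw : w ≠ 0) :
    DifferentiableAt ℂ (logIntegrand lam) w := by
  unfold logIntegrand
  exact DifferentiableAt.div (by fun_prop) (by fun_prop) hw

/-- Jordan's inequality on the second quadrant, reflected to the third. -/
theorem cos_le_of_mem_Icc_neg_pi {θ : ℝ} (h1 : -Real.pi ≤ θ) (h2 : θ ≤ -(Real.pi / 2)) :
    Real.cos θ ≤ 2 / Real.pi * (θ + Real.pi / 2) := by
  have h := Real.mul_le_sin (x := -(θ + Real.pi / 2)) (by linarith) (by linarith)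
  rw [Real.sin_neg, Real.sin_add_pi_div_two] at h
  linarith

theorem norm_logIntegrand_le {lam s θ : ℝ} (hlam : 0 ≤ lam) (hs : s ≠ 0) (h1 : -Real.pi ≤ θ)
    (h2 : θ ≤ -(Real.pi / 2)) :
    ‖logIntegrand lam (s + θ * I)‖ ≤
      Real.exp (lam * Real.exp s * (2 / Real.pi * (θ + Real.pi / 2))) * Real.exp s / |s| := by
  have h : |s| ≤ ‖(s : ℂ) + θ * I‖ := by
    simpa using abs_re_le_norm ((s : ℂ) + θ * I)
  have hs' := abs_pos.2 hs
  rw [logIntegrand, norm_div, norm_mul, norm_exp, norm_exp]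
  have e1 : ((s : ℂ) + θ * I).re = s := by simp
  have e2 : ((lam : ℂ) * exp (s + θ * I)).re = lam * Real.exp s * Real.cos θ := by
    rw [re_ofReal_mul, exp_re]
    simp [mul_assoc]
  rw [e1, e2]
  gcongr
  exact cos_le_of_mem_Icc_neg_pi h1 h2

theorem norm_integral_logIntegrand_vertical_le {lam s : ℝ} (hlam : 0 < lam) (hs : s ≠ 0) :
    ‖∫ θ in (-Real.pi)..(-(Real.pi / 2)), logIntegrand lam (s + θ * I)‖ ≤
      Real.pi / (2 * lam * |s|) := by
  have hpi := Real.pi_pos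
  have hs' := abs_pos.2 hs
  let F : ℝ → ℝ := fun θ =>
    Real.exp (lam * Real.exp s * (2 / Real.pi * (θ + Real.pi / 2))) *
      (Real.pi / (2 * lam * |s|))
  have hF : ∀ θ : ℝ, HasDerivAt F
      (Real.exp (lam * Real.exp s * (2 / Real.pi * (θ + Real.pi / 2))) * Real.exp s / |s|) θ := by
    intro θ
    have h := ((((((hasDerivAt_id θ).add_const (Real.pi / 2)).const_mul (2 / Real.pi)).const_mul
      (lam * Real.exp s))).exp).mul_const (Real.pi / (2 * lam * |s|))
    convert! h using 1
    simp only [id]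
    field_simp
  have hint : IntervalIntegrable (fun θ : ℝ =>
      Real.exp (lam * Real.exp s * (2 / Real.pi * (θ + Real.pi / 2))) * Real.exp s / |s|)
      MeasureTheory.volume (-Real.pi) (-(Real.pi / 2)) :=
    Continuous.intervalIntegrable (by fun_prop) _ _
  refine (intervalIntegral.norm_integral_le_of_norm_le (by linarith)
    (Eventually.of_forall fun θ hθ => norm_logIntegrand_le hlam.le hs hθ.1.le hθ.2) hint).trans ?_
  rw [intervalIntegral.integral_eq_sub_of_hasDerivAt (fun θ _ => hF θ) hint]
  have h1 : F (-(Real.pi / 2)) = Real.pi / (2 * lam * |s|) := by simp [F]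
  have h2 : 0 ≤ F (-Real.pi) := by positivity
  linarith

theorem integral_rayIntegrand_sub_eq (lam : ℝ) {T : ℝ} (hT : 0 < T) :
    (∫ r in T⁻¹..T, rayIntegrand lam (-(Real.pi / 2)) r) -
        ∫ r in T⁻¹..T, rayIntegrand lam (-Real.pi) r =
      I * ((∫ θ in (-Real.pi)..(-(Real.pi / 2)), logIntegrand lam ((Real.log T : ℝ) + θ * I)) -
        ∫ θ in (-Real.pi)..(-(Real.pi / 2)), logIntegrand lam ((-Real.log T : ℝ) + θ * I)) := by
  have hpi := Real.pi_pos
  have h := Complex.integral_boundary_rect_eq_zero_of_differentiableOn (logIntegrand lam)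
    ⟨-Real.log T, -Real.pi⟩ ⟨Real.log T, -(Real.pi / 2)⟩ (by
      intro w hw
      refine (differentiableAt_logIntegrand lam ?_).differentiableWithinAt
      rintro rfl
      have h2 := (mem_reProdIm.1 hw).2
      simp only [Set.uIcc_of_le (show -Real.pi ≤ -(Real.pi / 2) by linarith), zero_im] at h2
      linarith [h2.2])
  simp only [smul_eq_mul] at h
  rw [integral_logIntegrand_horizontal lam (by linarith) hT,
    integral_logIntegrand_horizontal lam (by linarith) hT] at h
  linear_combination -h

theorem tendsto_integral_rayIntegrand_sub {lam : ℝ} (hlam : 0 < lam) :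
    Tendsto (fun T : ℝ => (∫ r in T⁻¹..T, rayIntegrand lam (-(Real.pi / 2)) r) -
      ∫ r in T⁻¹..T, rayIntegrand lam (-Real.pi) r) atTop (nhds 0) := by
  have hlim : Tendsto (fun T : ℝ => Real.pi / lam * (Real.log T)⁻¹) atTop (nhds 0) := by
    simpa using (Real.tendsto_log_atTop.inv_tendsto_atTop).const_mul (Real.pi / lam)
  refine squeeze_zero_norm' ?_ hlim
  filter_upwards [eventually_gt_atTop 1] with T hT
  have hlog := Real.log_pos hT
  rw [integral_rayIntegrand_sub_eq lam (by linarith), norm_mul, norm_I, one_mul]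
  refine (norm_sub_le _ _).trans ((add_le_add
    (norm_integral_logIntegrand_vertical_le hlam hlog.ne')
    (norm_integral_logIntegrand_vertical_le hlam (neg_ne_zero.2 hlog.ne'))).trans_eq ?_)
  rw [abs_neg, abs_of_pos hlog]
  field_simp
  norm_num

theorem tendsto_integral_rayIntegrand_zero_inv {lam θ : ℝ} (hlam : 0 ≤ lam) (hθ : θ ≠ 0)
    (hcos : Real.cos θ ≤ 0) :
    Tendsto (fun T : ℝ => ∫ r in (0 : ℝ)..T⁻¹, rayIntegrand lam θ r) atTop (nhds 0) := by
  have hlim : Tendsto (fun T : ℝ => |θ|⁻¹ * T⁻¹) atTop (nhds 0) := by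
    simpa using tendsto_inv_atTop_zero.const_mul (|θ|⁻¹)
  refine squeeze_zero_norm' ?_ hlim
  filter_upwards [eventually_gt_atTop 0] with T hT
  have hT' := inv_pos.2 hT
  have h := intervalIntegral.norm_integral_le_of_norm_le_const (a := 0) (b := T⁻¹)
    (f := rayIntegrand lam θ) (C := |θ|⁻¹) fun r hr => by
      rw [Set.uIoc_of_le hT'.le] at hr
      exact norm_rayIntegrand_le_inv hlam hr.1.le hθ hcos
  rwa [sub_zero, abs_of_pos hT'] at h

theorem integrableOn_rayIntegrand_neg_pi {lam : ℝ} (hlam : 0 < lam) :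
    MeasureTheory.IntegrableOn (rayIntegrand lam (-Real.pi)) (Set.Ioi 0) := by
  refine ((exp_neg_integrableOn_Ioi 0 hlam).div_const |-Real.pi|).mono'
    (measurable_rayIntegrand _ _).aestronglyMeasurable (Eventually.of_forall fun r => ?_)
  refine (norm_rayIntegrand_le lam r (neg_ne_zero.2 Real.pi_ne_zero)).trans_eq ?_
  simp

theorem tendsto_integral_rayIntegrand {lam : ℝ} (hlam : 0 < lam) :
    Tendsto (fun T : ℝ => ∫ r in (0 : ℝ)..T, rayIntegrand lam (-(Real.pi / 2)) r) atTop
      (nhds (∫ r in Set.Ioi (0 : ℝ), rayIntegrand lam (-Real.pi) r)) := by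
  have hpi := Real.pi_pos
  have n1 : -(Real.pi / 2) ≠ 0 := by linarith
  have n2 : -Real.pi ≠ 0 := by linarith
  have c1 : Real.cos (-(Real.pi / 2)) ≤ 0 := by simp
  have c2 : Real.cos (-Real.pi) ≤ 0 := by simp
  have h := (((tendsto_integral_rayIntegrand_sub hlam).add
    (tendsto_integral_rayIntegrand_zero_inv hlam.le n1 c1)).sub
    (tendsto_integral_rayIntegrand_zero_inv hlam.le n2 c2)).add
    (MeasureTheory.intervalIntegral_tendsto_integral_Ioi 0
      (integrableOn_rayIntegrand_neg_pi hlam) tendsto_id)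
  simp only [add_zero, sub_zero, zero_add] at h
  refine h.congr' ?_
  filter_upwards [eventually_gt_atTop 0] with T hT
  have hT' := (inv_pos.2 hT).le
  have e1 := intervalIntegral.integral_add_adjacent_intervals
    (intervalIntegrable_rayIntegrand hlam.le le_rfl hT' n1 c1)
    (intervalIntegrable_rayIntegrand hlam.le hT' hT.le n1 c1)
  have e2 := intervalIntegral.integral_add_adjacent_intervals
    (intervalIntegrable_rayIntegrand hlam.le le_rfl hT' n2 c2)
    (intervalIntegrable_rayIntegrand hlam.le hT' hT.le n2 c2)
  rw [id, ← e1, ← e2]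
  ring

theorem exp_ofReal_neg_pi_div_two_mul_I : exp ((-(Real.pi / 2) : ℝ) * I) = -I := by
  apply Complex.ext
  · rw [exp_ofReal_mul_I_re]; simp
  · rw [exp_ofReal_mul_I_im]; simp

theorem exp_ofReal_neg_pi_mul_I : exp ((-Real.pi : ℝ) * I) = -1 := by
  apply Complex.ext
  · rw [exp_ofReal_mul_I_re]; simp
  · rw [exp_ofReal_mul_I_im]; simp

theorem log_neg_I_mul_ofReal {r : ℝ} (hr : 0 < r) :
    log (-I * r) = Real.log r + (-(Real.pi / 2) : ℝ) * I := by
  rw [log_mul_ofReal r hr _ (by simp), log_neg_I]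
  push_cast
  ring

theorem log_neg_I_mul_ofReal_neg {r : ℝ} (hr : 0 < r) :
    log (-I * (-r : ℝ)) = Real.log r + (Real.pi / 2 : ℝ) * I := by
  rw [show -I * ((-r : ℝ) : ℂ) = I * r by push_cast; ring, log_mul_ofReal r hr _ I_ne_zero, log_I]
  push_cast
  ring

theorem div_log_eq_I_mul_rayIntegrand (lam : ℝ) {r : ℝ} (hr : 0 < r) :
    exp (-I * lam * r) / log (-I * r) = I * rayIntegrand lam (-(Real.pi / 2)) r := by
  rw [rayIntegrand, exp_ofReal_neg_pi_div_two_mul_I, log_neg_I_mul_ofReal hr,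
    show (lam : ℂ) * r * -I = -I * lam * r by ring]
  linear_combination (exp (-I * lam * r) / (Real.log r + (-(Real.pi / 2) : ℝ) * I)) * I_mul_I

theorem div_log_neg_eq_conj (lam : ℝ) {r : ℝ} (hr : 0 < r) :
    exp (-I * lam * (-r : ℝ)) / log (-I * (-r : ℝ)) =
      (starRingEnd ℂ) (exp (-I * lam * r) / log (-I * r)) := by
  rw [log_neg_I_mul_ofReal hr, log_neg_I_mul_ofReal_neg hr, map_div₀, ← exp_conj]
  simp [map_ofNat]

theorem integral_symm_div_log (lam : ℝ) (hlam : 0 ≤ lam) {T : ℝ} (hT : 0 ≤ T) :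
    ∫ u in (-T)..T, exp (-I * lam * u) / log (-I * u) =
      (2 * (I * ∫ r in (0 : ℝ)..T, rayIntegrand lam (-(Real.pi / 2)) r).re : ℝ) := by
  have hpi := Real.pi_pos
  have hray : IntervalIntegrable (fun r => I * rayIntegrand lam (-(Real.pi / 2)) r)
      MeasureTheory.volume 0 T :=
    (intervalIntegrable_rayIntegrand hlam le_rfl hT (by linarith) (by simp)).const_mul I
  have hpos : Set.EqOn (fun r : ℝ => I * rayIntegrand lam (-(Real.pi / 2)) r)
      (fun u : ℝ => exp (-I * lam * u) / log (-I * u)) (Set.uIoc 0 T) := by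
    intro r hr
    rw [Set.uIoc_of_le hT] at hr
    exact (div_log_eq_I_mul_rayIntegrand lam hr.1).symm
  have hneg : Set.EqOn
      (fun r : ℝ => (starRingEnd ℂ) (I * rayIntegrand lam (-(Real.pi / 2)) r))
      (fun u : ℝ => exp (-I * lam * (-u : ℝ)) / log (-I * (-u : ℝ))) (Set.uIoc 0 T) := by
    intro r hr
    rw [Set.uIoc_of_le hT] at hr
    simp only [div_log_neg_eq_conj lam hr.1, div_log_eq_I_mul_rayIntegrand lam hr.1]
  have hconj : IntervalIntegrable
      (fun r => (starRingEnd ℂ) (I * rayIntegrand lam (-(Real.pi / 2)) r))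
      MeasureTheory.volume 0 T :=
    ⟨conjCLE.toContinuousLinearMap.integrable_comp hray.1,
      conjCLE.toContinuousLinearMap.integrable_comp hray.2⟩
  have i1 := hray.congr hpos
  have i2 := hconj.congr hneg
  have i3 : IntervalIntegrable (fun u : ℝ => exp (-I * lam * u) / log (-I * u))
      MeasureTheory.volume (-T) 0 := by
    have := (IntervalIntegrable.iff_comp_neg (f := fun u : ℝ => exp (-I * lam * u) / log (-I * u))
      (a := 0) (b := -T)).2 (by simpa using i2)
    exact this.symm
  rw [← intervalIntegral.integral_add_adjacent_intervals i3 i1]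
  have e1 : ∫ u in (0 : ℝ)..T, exp (-I * lam * u) / log (-I * u) =
      I * ∫ r in (0 : ℝ)..T, rayIntegrand lam (-(Real.pi / 2)) r := by
    rw [← intervalIntegral.integral_const_mul]
    exact (intervalIntegral.integral_congr_ae (Eventually.of_forall hpos)).symm
  have e2 : ∫ u in (-T)..0, exp (-I * lam * u) / log (-I * u) =
      (starRingEnd ℂ) (I * ∫ r in (0 : ℝ)..T, rayIntegrand lam (-(Real.pi / 2)) r) := by
    have h := intervalIntegral.integral_comp_neg (a := 0) (b := T)
      (fun u : ℝ => exp (-I * lam * u) / log (-I * u))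
    rw [neg_zero] at h
    rw [← h, ← intervalIntegral.integral_congr_ae (Eventually.of_forall hneg),
      ← intervalIntegral.integral_const_mul, intervalIntegral.intervalIntegral_conj]
  rw [e1, e2, add_comm, add_conj]

theorem re_I_mul_rayIntegrand_neg_pi (lam r : ℝ) :
    (I * rayIntegrand lam (-Real.pi) r).re =
      Real.pi * (Real.exp (-lam * r) / ((Real.log r) ^ 2 + Real.pi ^ 2)) := by
  rw [rayIntegrand, exp_ofReal_neg_pi_mul_I,
    show (lam : ℂ) * r * -1 = ((-lam * r : ℝ) : ℂ) by push_cast; ring, ← ofReal_exp, I_mul_re,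
    mul_neg_one, ← ofReal_neg, div_eq_mul_inv, im_ofReal_mul, inv_im, normSq_add_mul_I]
  simp
  ring

theorem re_I_mul_integral_rayIntegrand_neg_pi {lam : ℝ} (hlam : 0 < lam) :
    (I * ∫ r in Set.Ioi (0 : ℝ), rayIntegrand lam (-Real.pi) r).re = Real.pi * W lam := by
  rw [W, ← MeasureTheory.integral_const_mul, ← MeasureTheory.integral_const_mul]
  have h := integral_re (𝕜 := ℂ) ((integrableOn_rayIntegrand_neg_pi hlam).const_mul I)
  simp only [RCLike.re_to_complex, re_I_mul_rayIntegrand_neg_pi] at h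
  exact h.symm

theorem stmt12 (lam : ℝ) (hlam : 0 < lam) :
    Tendsto
      (fun T : ℝ => (1 / (2 * Real.pi) : ℂ) *
        ∫ u in (-T : ℝ)..T,
          Complex.exp (-Complex.I * lam * u) / Complex.log (-Complex.I * u))
      atTop (nhds ((W lam : ℂ))) := by
  have h := (continuous_re.tendsto _).comp ((tendsto_integral_rayIntegrand hlam).const_mul I)
  rw [re_I_mul_integral_rayIntegrand_neg_pi hlam] at h
  have h2 := (continuous_ofReal.tendsto _).comp (h.const_mul 2)
  have h3 := h2.const_mul (1 / (2 * Real.pi) : ℂ)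
  have hpi : (Real.pi : ℂ) ≠ 0 := ofReal_ne_zero.2 Real.pi_ne_zero
  have e : (1 / (2 * Real.pi) : ℂ) * ((2 * (Real.pi * W lam) : ℝ) : ℂ) = W lam := by
    push_cast
    field_simp
  rw [e] at h3
  refine h3.congr' ?_
  filter_upwards [eventually_ge_atTop 0] with T hT
  rw [integral_symm_div_log lam hlam.le hT]
  rfl
end

section
/- For every λ > 0, W(λ) = ∫_0^∞ sin(λt) / ((log t)² + π²/4) dt − e^{-λ}, where W(λ) = ∫_0^∞ e^{-λu}/((log u)² + π²) du and the first integral on the right is a conditionally convergent improper integral. -/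
open Filter

open Set MeasureTheory Topology

theorem mellin_inv_one_add {s : ℂ} (h0 : 0 < s.re) (h1 : s.re < 1) :
    mellin (fun x : ℝ => ((1 + x : ℝ) : ℂ)⁻¹) s = Real.pi / Complex.sin (Real.pi * s) := by
  have hΓ : ∀ v ∈ Ioi (0 : ℝ), ∫ x in Ioi (0 : ℝ), (x : ℂ) ^ (s - 1) * Complex.exp (-((1 + x) * v)) =
      Complex.Gamma s * (Complex.exp (-v) * (v : ℂ) ^ ((1 - s) - 1)) := by
    intro v hv
    have h := Complex.integral_cpow_mul_exp_neg_mul_Ioi h0 hv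
    have hv0 : (v : ℂ) ≠ 0 := by exact_mod_cast (ne_of_gt hv)
    rw [one_div, Complex.inv_cpow _ _ (by
      rw [Complex.arg_ofReal_of_nonneg (le_of_lt hv)]; exact Real.pi_pos.ne), ← Complex.cpow_neg] at h
    rw [show (1 - s) - 1 = -s by ring, mul_comm, mul_assoc, ← h, ← integral_const_mul]
    congr 1; ext x
    rw [show -((1 + (x : ℂ)) * v) = -v + -(v * x) by ring, Complex.exp_add]
    ring
  have hnorm : ∀ v ∈ Ioi (0 : ℝ),
      (∫ x in Ioi (0 : ℝ), ‖(x : ℂ) ^ (s - 1) * Complex.exp (-((1 + x) * v))‖) =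
      Real.Gamma s.re * (Real.exp (-v) * v ^ ((1 - s.re) - 1)) := by
    intro v hv
    have h := Real.integral_rpow_mul_exp_neg_mul_Ioi h0 hv
    rw [one_div, Real.inv_rpow (le_of_lt hv), ← Real.rpow_neg (le_of_lt hv)] at h
    rw [show (1 - s.re) - 1 = -s.re by ring, mul_comm, mul_assoc, ← h, ← integral_const_mul]
    refine setIntegral_congr_fun measurableSet_Ioi fun x hx => ?_
    rw [norm_mul, Complex.norm_cpow_eq_rpow_re_of_pos hx, Complex.norm_exp]
    have : (-((1 + (x : ℂ)) * v)).re = -v + -(v * x) := by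
      rw [← Complex.ofReal_one, ← Complex.ofReal_add, ← Complex.ofReal_mul, ← Complex.ofReal_neg,
        Complex.ofReal_re]
      ring
    rw [this, Real.exp_add]
    simp
    ring
  have hInt : Integrable (Function.uncurry fun (x v : ℝ) =>
      (x : ℂ) ^ (s - 1) * Complex.exp (-((1 + x) * v)))
      ((volume.restrict (Ioi 0)).prod (volume.restrict (Ioi 0))) := by
    have hm : AEStronglyMeasurable (Function.uncurry fun (x v : ℝ) =>
      (x : ℂ) ^ (s - 1) * Complex.exp (-((1 + x) * v)))
      ((volume.restrict (Ioi 0)).prod (volume.restrict (Ioi 0))) := by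
      refine Measurable.aestronglyMeasurable ?_
      unfold Function.uncurry
      fun_prop
    refine (integrable_prod_iff' hm).2 ⟨?_, ?_⟩
    · filter_upwards [ae_restrict_mem measurableSet_Ioi] with v hv
      by_contra hcon
      have h1 := hnorm v hv
      rw [integral_undef (by rwa [integrable_norm_iff]; exact Measurable.aestronglyMeasurable (by fun_prop))] at h1
      have : 0 < Real.Gamma s.re * (Real.exp (-v) * v ^ ((1 - s.re) - 1)) :=
        mul_pos (Real.Gamma_pos_of_pos h0) (mul_pos (Real.exp_pos _) (Real.rpow_pos_of_pos hv _))
      linarith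
    · refine Integrable.congr (f := fun v => Real.Gamma s.re * (Real.exp (-v) * v ^ ((1 - s.re) - 1)))
        ((Real.GammaIntegral_convergent (by linarith)).const_mul _) ?_
      filter_upwards [ae_restrict_mem measurableSet_Ioi] with v hv using (hnorm v hv).symm
  have hswap := integral_integral_swap hInt
  rw [setIntegral_congr_fun measurableSet_Ioi hΓ, integral_const_mul] at hswap
  rw [← Complex.Gamma_mul_Gamma_one_sub, Complex.Gamma_eq_integral (s := 1 - s) (by simpa using h1)]
  unfold Complex.GammaIntegral
  simp only [Complex.ofReal_neg, Complex.ofReal_exp]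
  rw [← hswap]
  unfold mellin
  refine setIntegral_congr_fun measurableSet_Ioi fun x hx => ?_
  simp only [smul_eq_mul]
  rw [integral_const_mul]
  congr 1
  have hx' : (0 : ℝ) < 1 + x := by have : 0 < x := hx; linarith
  have h := integral_exp_mul_complex_Ioi (a := -(1 + x)) (by simp; linarith) 0
  simp only [neg_mul] at h
  rw [h, neg_div_neg_eq]
  simp

theorem mellin_inv_one_add_sq (k : ℝ) :
    mellin (fun x : ℝ => ((1 + x ^ 2 : ℝ) : ℂ)⁻¹) (1 + k * Complex.I) =
      ((Real.pi / 2 / Real.cosh (Real.pi * k / 2) : ℝ) : ℂ) := by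
  have h := mellin_comp_rpow (fun x : ℝ => ((1 + x : ℝ) : ℂ)⁻¹) (1 + k * Complex.I) 2
  simp only [Real.rpow_two] at h
  rw [h, mellin_inv_one_add (by simp) (by simp; norm_num)]
  have : (Real.pi : ℂ) * ((1 + k * Complex.I) / (2 : ℝ)) = Real.pi * k / 2 * Complex.I + Real.pi / 2 := by
    push_cast; ring
  rw [this, Complex.sin_add_pi_div_two, Complex.cos_mul_I]
  rw [Complex.real_smul]
  push_cast
  rw [abs_two]
  push_cast
  ring

theorem pi_div_two_div_cosh (k : ℝ) : Real.pi / 2 / Real.cosh (Real.pi * k / 2) =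
    Real.pi * Real.exp (-(Real.pi / 2) * k) / (1 + Real.exp (-Real.pi * k)) := by
  rw [Real.cosh_eq]
  have e1 : Real.exp (-Real.pi * k) = Real.exp (-(Real.pi / 2) * k) * Real.exp (-(Real.pi / 2) * k) := by
    rw [← Real.exp_add]; ring_nf
  have e2 : Real.exp (Real.pi * k / 2) = (Real.exp (-(Real.pi / 2) * k))⁻¹ := by
    rw [← Real.exp_neg]; ring_nf
  have e3 : Real.exp (-(Real.pi * k / 2)) = Real.exp (-(Real.pi / 2) * k) := by ring_nf
  rw [e1, e2, e3]
  have := Real.exp_pos (-(Real.pi / 2) * k)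
  field_simp

theorem integrableOn_div_cosh :
    IntegrableOn (fun k : ℝ => Real.pi / 2 / Real.cosh (Real.pi * k / 2)) (Ioi 0) := by
  have hc : Continuous fun k : ℝ => Real.pi / 2 / Real.cosh (Real.pi * k / 2) :=
    Continuous.div (by fun_prop) (Real.continuous_cosh.comp (by fun_prop))
      fun k => (Real.cosh_pos _).ne'
  refine Integrable.mono' ((integrableOn_exp_mul_Ioi (a := -(Real.pi / 2))
    (by linarith [Real.pi_pos]) 0).const_mul Real.pi) hc.aestronglyMeasurable ?_
  refine Eventually.of_forall fun k => ?_
  have := Real.pi_pos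
  rw [Real.norm_of_nonneg (div_nonneg (by positivity) (Real.cosh_pos _).le), pi_div_two_div_cosh]
  exact div_le_self (by positivity) (by linarith [Real.exp_pos (-Real.pi * k)])

theorem integrable_div_cosh :
    Integrable (fun k : ℝ => Real.pi / 2 / Real.cosh (Real.pi * k / 2)) := by
  rw [← integrableOn_univ, ← Iic_union_Ioi (a := (0 : ℝ))]
  refine IntegrableOn.union ?_ integrableOn_div_cosh
  have h := integrableOn_div_cosh
  rw [← neg_zero] at h
  have h' := Iff.mpr integrableOn_Iic_iff_integrableOn_Iio h.comp_neg_Iio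
  refine h'.congr_fun (fun k _ => ?_) measurableSet_Iic
  simp [neg_div]

theorem integral_cos_mul_log {t : ℝ} (ht : 0 < t) (k : ℝ) :
    ∫ u in Ioi (0 : ℝ), t / (t ^ 2 + u ^ 2) * Real.cos (k * Real.log u) =
      Real.cos (k * Real.log t) * (Real.pi / 2 / Real.cosh (Real.pi * k / 2)) := by
  have h := mellin_comp_mul_left (fun x : ℝ => ((1 + x ^ 2 : ℝ) : ℂ)⁻¹) (1 + k * Complex.I)
    (inv_pos.2 ht)
  rw [mellin_inv_one_add_sq] at h
  unfold mellin at h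
  have hexp : ∀ u : ℝ, 0 < u → (u : ℂ) ^ ((1 + k * Complex.I) - 1) =
      Complex.exp ((k * Real.log u : ℝ) * Complex.I) := by
    intro u hu
    rw [Complex.cpow_def_of_ne_zero (by exact_mod_cast hu.ne'), ← Complex.ofReal_log hu.le]
    push_cast; ring_nf
  have hR : ((t⁻¹ : ℝ) : ℂ) ^ (-(1 + k * Complex.I)) = t * Complex.exp ((k * Real.log t : ℝ) * Complex.I) := by
    rw [Complex.cpow_def_of_ne_zero (by exact_mod_cast (inv_pos.2 ht).ne'),
      ← Complex.ofReal_log (inv_pos.2 ht).le, Real.log_inv]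
    have : (t : ℂ) = Complex.exp (Real.log t) := by
      rw [← Complex.ofReal_exp, Real.exp_log ht]
    conv_rhs => rw [this]
    rw [← Complex.exp_add]
    push_cast; ring_nf
  rw [hR] at h
  have hcongr : ∀ u ∈ Ioi (0 : ℝ), (u : ℂ) ^ ((1 + k * Complex.I) - 1) • ((1 + (t⁻¹ * u) ^ 2 : ℝ) : ℂ)⁻¹
      = Complex.exp ((k * Real.log u : ℝ) * Complex.I) * ((t * (t / (t ^ 2 + u ^ 2)) : ℝ) : ℂ) := by
    intro u hu
    rw [hexp u hu, smul_eq_mul, ← Complex.ofReal_inv]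
    congr 2
    field_simp
  rw [setIntegral_congr_fun measurableSet_Ioi hcongr] at h
  have hint : Integrable (fun u : ℝ => Complex.exp ((k * Real.log u : ℝ) * Complex.I) *
      ((t * (t / (t ^ 2 + u ^ 2)) : ℝ) : ℂ)) (volume.restrict (Ioi 0)) := by
    have hb : Integrable (fun u : ℝ => (1 + (u / t) ^ 2)⁻¹) :=
      integrable_inv_one_add_sq.comp_div ht.ne'
    refine Integrable.mono' hb.integrableOn (Measurable.aestronglyMeasurable (by fun_prop)) ?_
    refine Eventually.of_forall fun u => ?_
    rw [norm_mul, Complex.norm_exp_ofReal_mul_I, one_mul, Complex.norm_real,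
      Real.norm_of_nonneg (by positivity)]
    apply le_of_eq
    field_simp
  have h2 := congrArg Complex.re h
  rw [← RCLike.re_eq_complex_re, ← integral_re hint] at h2
  simp only [RCLike.re_eq_complex_re, Complex.re_mul_ofReal, Complex.exp_ofReal_mul_I_re, smul_eq_mul,
    mul_assoc, Complex.re_ofReal_mul] at h2
  have h3 : ∀ u : ℝ, Real.cos (k * Real.log u) * (t * (t / (t ^ 2 + u ^ 2))) =
    t * (t / (t ^ 2 + u ^ 2) * Real.cos (k * Real.log u)) := fun u => by ring
  simp only [h3] at h2
  rw [integral_const_mul] at h2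
  exact mul_left_cancel₀ ht.ne' h2

theorem integral_cos_log_mul_div_cosh {t : ℝ} (ht : 0 < t) :
    ∫ k in Ioi (0 : ℝ), Real.cos (k * Real.log t) * (Real.pi / 2 / Real.cosh (Real.pi * k / 2)) =
      Real.pi * (t / (t ^ 2 + 1)) := by
  have h := mellinInv_mellin_eq 1 (fun x : ℝ => ((1 + x ^ 2 : ℝ) : ℂ)⁻¹) ht ?_ ?_ ?_
  · unfold mellinInv at h
    simp only [Complex.ofReal_one, mellin_inv_one_add_sq] at h
    have hR : ∀ y : ℝ, (t : ℂ) ^ (-(1 + y * Complex.I)) =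
        (t⁻¹ : ℝ) * Complex.exp ((-(y * Real.log t) : ℝ) * Complex.I) := by
      intro y
      rw [Complex.cpow_def_of_ne_zero (by exact_mod_cast ht.ne'), ← Complex.ofReal_log ht.le]
      have : ((t⁻¹ : ℝ) : ℂ) = Complex.exp (-Real.log t) := by
        rw [← Complex.ofReal_neg, ← Complex.ofReal_exp, Real.exp_neg, Real.exp_log ht]
      rw [this, ← Complex.exp_add]
      push_cast; ring_nf
    simp only [hR, smul_eq_mul] at h
    have hint : Integrable (fun y : ℝ => (t⁻¹ : ℝ) * Complex.exp ((-(y * Real.log t) : ℝ) * Complex.I) *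
      ((Real.pi / 2 / Real.cosh (Real.pi * y / 2) : ℝ) : ℂ)) := by
      refine Integrable.mono' (integrable_div_cosh.const_mul t⁻¹)
        (Measurable.aestronglyMeasurable (by fun_prop)) ?_
      refine Eventually.of_forall fun u => ?_
      rw [norm_mul, norm_mul, Complex.norm_exp_ofReal_mul_I, mul_one, Complex.norm_real,
        Complex.norm_real, Real.norm_of_nonneg (by positivity), Real.norm_of_nonneg]
      exact div_nonneg Real.pi_div_two_pos.le (Real.cosh_pos _).le
    have h2 := congrArg Complex.re h
    rw [Complex.real_smul, Complex.re_ofReal_mul, ← RCLike.re_eq_complex_re, ← integral_re hint] at h2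
    simp only [RCLike.re_eq_complex_re, Complex.re_mul_ofReal, Complex.exp_ofReal_mul_I_re,
      mul_assoc, Complex.re_ofReal_mul, Real.cos_neg, ← Complex.ofReal_inv, Complex.ofReal_re] at h2
    rw [integral_const_mul] at h2
    have habs := integral_comp_abs (f := fun k : ℝ => Real.cos (k * Real.log t) * (Real.pi / 2 / Real.cosh (Real.pi * k / 2)))
    have : ∀ y : ℝ, Real.cos (|y| * Real.log t) * (Real.pi / 2 / Real.cosh (Real.pi * |y| / 2)) =
      Real.cos (y * Real.log t) * (Real.pi / 2 / Real.cosh (Real.pi * y / 2)) := by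
      intro y
      rcases abs_choice y with h | h <;> rw [h]
      simp [neg_div]
    simp only [this] at habs
    rw [habs] at h2
    have := Real.pi_pos
    generalize (∫ k in Ioi (0 : ℝ), Real.cos (k * Real.log t) *
      (Real.pi / 2 / Real.cosh (Real.pi * k / 2))) = J at h2 ⊢
    field_simp at h2 ⊢
    linarith
  · unfold MellinConvergent
    simpa using (integrable_inv_one_add_sq.ofReal (𝕜 := ℂ)).integrableOn (s := Ioi (0 : ℝ))
  · unfold Complex.VerticalIntegrable
    simp only [Complex.ofReal_one, mellin_inv_one_add_sq]
    exact integrable_div_cosh.ofReal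
  · refine Continuous.continuousAt ?_
    have : ∀ x : ℝ, ((1 + x ^ 2 : ℝ) : ℂ) ≠ 0 := fun x => by
      exact_mod_cast (by positivity : (0 : ℝ) < 1 + x ^ 2).ne'
    fun_prop (disch := assumption)

theorem integral_exp_mul_cos {c : ℝ} (hc : 0 < c) (a : ℝ) :
    ∫ k in Ioi (0 : ℝ), Real.exp (-c * k) * Real.cos (a * k) = c / (a ^ 2 + c ^ 2) := by
  have h := integral_exp_mul_complex_Ioi (a := -c + a * Complex.I) (by simpa using hc) 0
  have hi := integrableOn_exp_mul_complex_Ioi (a := -c + a * Complex.I) (by simpa using hc) 0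
  have h2 := congrArg Complex.re h
  rw [← RCLike.re_eq_complex_re, ← integral_re hi] at h2
  simp only [RCLike.re_eq_complex_re, Complex.exp_re] at h2
  simp [Complex.div_re, Complex.normSq_apply] at h2
  simp only [neg_mul]
  rw [h2]
  ring

theorem integrable_div_sq_add_sq {t : ℝ} (ht : 0 < t) :
    Integrable fun u : ℝ => t / (t ^ 2 + u ^ 2) := by
  refine ((integrable_inv_one_add_sq.comp_div ht.ne').const_mul t⁻¹).congr
    (Eventually.of_forall fun u => ?_)
  field_simp

theorem integral_div_sq_add_sq_mul_inv_log {t : ℝ} (ht : 0 < t) :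
    ∫ u in Ioi (0 : ℝ), t / (t ^ 2 + u ^ 2) * (Real.log u ^ 2 + Real.pi ^ 2)⁻¹ =
      Real.pi / 2 / (Real.log t ^ 2 + Real.pi ^ 2 / 4) - t / (t ^ 2 + 1) := by
  have hpi := Real.pi_pos
  have hInt : Integrable (Function.uncurry fun u k : ℝ => t / (t ^ 2 + u ^ 2) *
      (Real.exp (-Real.pi * k) * Real.cos (Real.log u * k)))
      ((volume.restrict (Ioi 0)).prod (volume.restrict (Ioi 0))) := by
    refine Integrable.mono' ((integrable_div_sq_add_sq ht).integrableOn.mul_prod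
      (integrableOn_exp_mul_Ioi (a := -Real.pi) (by linarith) 0))
      (Measurable.aestronglyMeasurable (by unfold Function.uncurry; fun_prop)) ?_
    refine Eventually.of_forall fun p => ?_
    simp only [Function.uncurry]
    rw [norm_mul, norm_mul, Real.norm_of_nonneg (by positivity),
      Real.norm_of_nonneg (Real.exp_pos _).le]
    have : ‖Real.cos (Real.log p.1 * p.2)‖ ≤ 1 := Real.abs_cos_le_one _
    gcongr
    exact mul_le_of_le_one_right (Real.exp_pos _).le this
  have hswap := integral_integral_swap hInt
  have h1 : ∀ u : ℝ, (∫ k in Ioi (0 : ℝ), t / (t ^ 2 + u ^ 2) *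
      (Real.exp (-Real.pi * k) * Real.cos (Real.log u * k))) =
      Real.pi * (t / (t ^ 2 + u ^ 2) * (Real.log u ^ 2 + Real.pi ^ 2)⁻¹) := by
    intro u
    rw [integral_const_mul, integral_exp_mul_cos hpi]
    ring
  have h2 : ∀ k : ℝ, (∫ u in Ioi (0 : ℝ), t / (t ^ 2 + u ^ 2) *
      (Real.exp (-Real.pi * k) * Real.cos (Real.log u * k))) =
      Real.pi * (Real.exp (-(Real.pi / 2) * k) * Real.cos (Real.log t * k)) -
      Real.cos (k * Real.log t) * (Real.pi / 2 / Real.cosh (Real.pi * k / 2)) := by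
    intro k
    have : ∀ u : ℝ, t / (t ^ 2 + u ^ 2) * (Real.exp (-Real.pi * k) * Real.cos (Real.log u * k)) =
        Real.exp (-Real.pi * k) * (t / (t ^ 2 + u ^ 2) * Real.cos (k * Real.log u)) := by
      intro u; rw [mul_comm k]; ring
    simp only [this]
    rw [integral_const_mul, integral_cos_mul_log ht, pi_div_two_div_cosh, mul_comm k]
    have := Real.exp_pos (-Real.pi * k)
    field_simp
    ring
  simp only [h1, h2] at hswap
  rw [integral_const_mul, integral_sub, integral_const_mul, integral_exp_mul_cos (by positivity),
    integral_cos_log_mul_div_cosh ht] at hswap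
  · have h4 : (Real.pi / 2) ^ 2 = Real.pi ^ 2 / 4 := by ring
    rw [h4, ← mul_sub] at hswap
    exact mul_left_cancel₀ hpi.ne' hswap
  · refine Integrable.const_mul (Integrable.mono' (integrableOn_exp_mul_Ioi
      (a := -(Real.pi / 2)) (by linarith) 0) (Measurable.aestronglyMeasurable (by fun_prop)) ?_) _
    refine Eventually.of_forall fun k => ?_
    rw [norm_mul, Real.norm_of_nonneg (Real.exp_pos _).le]
    exact mul_le_of_le_one_right (Real.exp_pos _).le (Real.abs_cos_le_one _)
  · refine Integrable.mono' integrableOn_div_cosh (Measurable.aestronglyMeasurable (by fun_prop)) ?_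
    refine Eventually.of_forall fun k => ?_
    have h0 := div_nonneg (by positivity : 0 ≤ Real.pi / 2) (Real.cosh_pos (Real.pi * k / 2)).le
    rw [norm_mul, Real.norm_of_nonneg h0]
    exact mul_le_of_le_one_left h0 (Real.abs_cos_le_one _)

theorem integrable_exp_neg_mul_abs {c : ℝ} (hc : 0 < c) :
    Integrable fun x : ℝ => Real.exp (-c * |x|) := by
  have h := integrableOn_exp_mul_Ioi (a := -c) (by linarith) 0
  rw [← integrableOn_univ, ← Iic_union_Ioi (a := (0 : ℝ))]
  refine IntegrableOn.union ?_ ?_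
  · refine (integrableOn_exp_mul_Iic hc 0).congr_fun (fun x hx => ?_) measurableSet_Iic
    simp [abs_of_nonpos (show x ≤ 0 from hx)]
  · refine h.congr_fun (fun x hx => ?_) measurableSet_Ioi
    simp [abs_of_pos (show 0 < x from hx)]

theorem fourier_exp_neg_mul_abs {c : ℝ} (hc : 0 < c) (y : ℝ) :
    FourierTransform.fourier (fun x : ℝ => (Real.exp (-c * |x|) : ℂ)) y =
      ((2 * (c / (c ^ 2 + (2 * Real.pi * y) ^ 2)) : ℝ) : ℂ) := by
  rw [Real.fourier_real_eq_integral_exp_smul]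
  simp only [smul_eq_mul]
  have hI : Integrable fun v : ℝ => Complex.exp (↑(-2 * Real.pi * v * y) * Complex.I) *
      (Real.exp (-c * |v|) : ℂ) := by
    refine Integrable.mono' (integrable_exp_neg_mul_abs hc)
      (Measurable.aestronglyMeasurable (by fun_prop)) (Eventually.of_forall fun v => ?_)
    rw [norm_mul, Complex.norm_exp_ofReal_mul_I, one_mul, Complex.norm_real,
      Real.norm_of_nonneg (Real.exp_pos _).le]
  rw [← intervalIntegral.integral_Iic_add_Ioi (b := 0) hI.integrableOn hI.integrableOn]
  have h1 : ∀ v ∈ Iic (0 : ℝ), Complex.exp (↑(-2 * Real.pi * v * y) * Complex.I) *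
      (Real.exp (-c * |v|) : ℂ) = Complex.exp ((c - 2 * Real.pi * y * Complex.I) * v) := by
    intro v hv
    rw [abs_of_nonpos hv, Complex.ofReal_exp, ← Complex.exp_add]
    push_cast; ring_nf
  have h2 : ∀ v ∈ Ioi (0 : ℝ), Complex.exp (↑(-2 * Real.pi * v * y) * Complex.I) *
      (Real.exp (-c * |v|) : ℂ) = Complex.exp (-(c + 2 * Real.pi * y * Complex.I) * v) := by
    intro v hv
    rw [abs_of_pos hv, Complex.ofReal_exp, ← Complex.exp_add]
    push_cast; ring_nf
  have r1 : (c - 2 * Real.pi * y * Complex.I : ℂ).re = c := by simp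
  have r2 : (c + 2 * Real.pi * y * Complex.I : ℂ).re = c := by simp
  have n1 : (c - 2 * Real.pi * y * Complex.I : ℂ) ≠ 0 := fun h => by
    rw [h] at r1; exact hc.ne r1
  have n2 : (c + 2 * Real.pi * y * Complex.I : ℂ) ≠ 0 := fun h => by
    rw [h] at r2; exact hc.ne r2
  rw [setIntegral_congr_fun measurableSet_Iic h1, setIntegral_congr_fun measurableSet_Ioi h2,
    integral_exp_mul_complex_Iic (by rw [r1]; exact hc),
    integral_exp_mul_complex_Ioi (by rw [Complex.neg_re, r2]; linarith), neg_div_neg_eq]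
  have h3 : (c ^ 2 + (2 * Real.pi * y) ^ 2 : ℂ) =
      (c - 2 * Real.pi * y * Complex.I) * (c + 2 * Real.pi * y * Complex.I) := by
    ring_nf
    rw [Complex.I_sq]; ring
  push_cast
  rw [h3]
  simp only [mul_zero, Complex.exp_zero]
  field_simp
  ring

theorem integral_cos_mul_div_sq_add_sq {c : ℝ} (hc : 0 < c) (u : ℝ) :
    ∫ x in Ioi (0 : ℝ), Real.cos (u * x) * (c / (c ^ 2 + x ^ 2)) =
      Real.pi / 2 * Real.exp (-c * |u|) := by
  have hpi := Real.pi_pos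
  have hint2 : Integrable fun y : ℝ => 2 * (c / (c ^ 2 + (2 * Real.pi * y) ^ 2)) :=
    ((integrable_div_sq_add_sq hc).comp_mul_left' (by positivity)).const_mul 2
  have hF : FourierTransform.fourier (fun x : ℝ => (Real.exp (-c * |x|) : ℂ)) = _ :=
    funext (fourier_exp_neg_mul_abs hc)
  have h := congrFun (Continuous.fourierInv_fourier_eq (f := fun x : ℝ => (Real.exp (-c * |x|) : ℂ))
    (by fun_prop) (integrable_exp_neg_mul_abs hc).ofReal (by rw [hF]; exact hint2.ofReal)) u
  rw [hF, Real.fourierInv_eq'] at h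
  have h2 := congrArg Complex.re h
  rw [← RCLike.re_eq_complex_re, ← integral_re] at h2
  · simp only [RCLike.re_eq_complex_re, smul_eq_mul, Complex.re_mul_ofReal,
      Complex.exp_ofReal_mul_I_re, Complex.ofReal_re] at h2
    have h3 := Measure.integral_comp_mul_left
      (fun x : ℝ => Real.cos (u * x) * (2 * (c / (c ^ 2 + x ^ 2)))) (2 * Real.pi)
    have h4 : ∀ v : ℝ, Real.cos (2 * Real.pi * inner ℝ v u) = Real.cos (u * (2 * Real.pi * v)) := by
      intro v; congr 1; simp; ring
    simp only [h4] at h2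
    rw [h3] at h2
    have h5 : ∀ x : ℝ, Real.cos (u * x) * (2 * (c / (c ^ 2 + x ^ 2))) =
        2 * (Real.cos (u * |x|) * (c / (c ^ 2 + |x| ^ 2))) := by
      intro x
      rw [sq_abs]
      rcases abs_choice x with h | h <;> rw [h]
      · ring
      · rw [mul_neg, Real.cos_neg]; ring
    simp only [h5] at h2
    rw [integral_const_mul, integral_comp_abs
      (f := fun x : ℝ => Real.cos (u * x) * (c / (c ^ 2 + x ^ 2))), smul_eq_mul, abs_of_pos (by positivity)] at h2
    generalize (∫ x in Ioi (0 : ℝ), Real.cos (u * x) * (c / (c ^ 2 + x ^ 2))) = K at h2 ⊢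
    rw [← h2]
    field_simp
  · refine Integrable.mono' hint2 (Measurable.aestronglyMeasurable (by fun_prop))
      (Eventually.of_forall fun v => ?_)
    rw [norm_smul, Complex.norm_exp_ofReal_mul_I, one_mul, Complex.norm_real,
      Real.norm_of_nonneg (by positivity)]

theorem integral_sin_mul_exp {lam : ℝ} (hlam : 0 < lam) (T x : ℝ) :
    ∫ t in (0 : ℝ)..T, Real.sin (lam * t) * Real.exp (-t * x) =
      (lam - Real.exp (-T * x) * (x * Real.sin (lam * T) + lam * Real.cos (lam * T))) /
        (lam ^ 2 + x ^ 2) := by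
  have hd : ∀ t : ℝ, HasDerivAt (fun t : ℝ => -(Real.exp (-t * x) *
      (x * Real.sin (lam * t) + lam * Real.cos (lam * t))) / (lam ^ 2 + x ^ 2))
      (Real.sin (lam * t) * Real.exp (-t * x)) t := by
    intro t
    have h1 : HasDerivAt (fun t : ℝ => Real.exp (-t * x)) (Real.exp (-t * x) * (-1 * x)) t :=
      ((hasDerivAt_id t).neg.mul_const x).exp
    have h0 : HasDerivAt (fun t : ℝ => lam * t) (lam * 1) t := (hasDerivAt_id t).const_mul lam
    refine ((h1.mul ((h0.sin.const_mul x).add (h0.cos.const_mul lam))).neg.div_const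
      (lam ^ 2 + x ^ 2)).congr_deriv ?_
    have : 0 < lam ^ 2 + x ^ 2 := by positivity
    simp only [Pi.add_apply]
    field_simp
    ring
  rw [intervalIntegral.integral_eq_sub_of_hasDerivAt (fun t _ => hd t)
    (Continuous.intervalIntegrable (by fun_prop) _ _)]
  simp
  ring

theorem abs_integral_sin_mul_div_le {lam u T : ℝ} (hlam : 0 < lam) (hu : 0 < u) (hT : 0 ≤ T) :
    |∫ t in (0 : ℝ)..T, Real.sin (lam * t) * (t / (t ^ 2 + u ^ 2))| ≤ (1 + Real.pi) / lam * u⁻¹ := by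
  have hpos : ∀ t : ℝ, 0 < t ^ 2 + u ^ 2 := fun t => by positivity
  have hne : ∀ t : ℝ, t ^ 2 + u ^ 2 ≠ 0 := fun t => (hpos t).ne'
  have hd : ∀ t : ℝ, HasDerivAt (fun t : ℝ => (1 - Real.cos (lam * t)) / lam * (t / (t ^ 2 + u ^ 2)))
      (Real.sin (lam * t) * (t / (t ^ 2 + u ^ 2)) +
        (1 - Real.cos (lam * t)) / lam * ((u ^ 2 - t ^ 2) / (t ^ 2 + u ^ 2) ^ 2)) t := by
    intro t
    have h0 : HasDerivAt (fun t : ℝ => lam * t) (lam * 1) t := (hasDerivAt_id t).const_mul lam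
    have h1 := (h0.cos.const_sub 1).div_const lam
    have h2 := (hasDerivAt_id t).div ((hasDerivAt_pow 2 t).add_const (u ^ 2)) (hne t)
    refine (h1.mul h2).congr_deriv ?_
    have := hne t
    simp
    field_simp
    ring
  have hc1 : Continuous fun t : ℝ => Real.sin (lam * t) * (t / (t ^ 2 + u ^ 2)) := by
    fun_prop (disch := assumption)
  have hne2 : ∀ t : ℝ, (t ^ 2 + u ^ 2) ^ 2 ≠ 0 := fun t => pow_ne_zero _ (hne t)
  have hc2 : Continuous fun t : ℝ =>
      (1 - Real.cos (lam * t)) / lam * ((u ^ 2 - t ^ 2) / (t ^ 2 + u ^ 2) ^ 2) := by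
    fun_prop (disch := assumption)
  have hparts := intervalIntegral.integral_eq_sub_of_hasDerivAt (a := 0) (b := T) (fun t _ => hd t)
    ((hc1.add hc2).intervalIntegrable _ _)
  rw [intervalIntegral.integral_add (hc1.intervalIntegrable _ _) (hc2.intervalIntegrable _ _)] at hparts
  have hcos : ∀ t : ℝ, |(1 - Real.cos (lam * t)) / lam| ≤ 2 / lam := by
    intro t
    rw [abs_div, abs_of_pos hlam]
    gcongr
    rw [abs_le]
    constructor <;> linarith [Real.cos_le_one (lam * t), Real.neg_one_le_cos (lam * t)]
  have hA : |(1 - Real.cos (lam * T)) / lam * (T / (T ^ 2 + u ^ 2))| ≤ 2 / lam * (u⁻¹ / 2) := by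
    rw [abs_mul]
    refine mul_le_mul (hcos T) ?_ (abs_nonneg _) (by positivity)
    rw [abs_of_nonneg (div_nonneg hT (hpos T).le), div_le_iff₀ (hpos T)]
    field_simp
    nlinarith [sq_nonneg (T - u)]
  have hB : ‖∫ t in (0 : ℝ)..T, (1 - Real.cos (lam * t)) / lam *
      ((u ^ 2 - t ^ 2) / (t ^ 2 + u ^ 2) ^ 2)‖ ≤ 2 / lam * (u⁻¹ * (Real.pi / 2)) := by
    have hc3 : Continuous fun t : ℝ => 2 / lam * ((u ^ 2)⁻¹ * (1 + (t / u) ^ 2)⁻¹) := by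
      have : ∀ t : ℝ, 1 + (t / u) ^ 2 ≠ 0 := fun t => by positivity
      fun_prop (disch := assumption)
    refine (intervalIntegral.norm_integral_le_of_norm_le hT (Eventually.of_forall fun t _ => ?_)
      (hc3.intervalIntegrable _ _)).trans ?_
    · rw [norm_mul]
      refine mul_le_mul (hcos t) ?_ (norm_nonneg _) (by positivity)
      rw [Real.norm_eq_abs, abs_div, abs_of_pos (pow_pos (hpos t) 2)]
      have : (u ^ 2)⁻¹ * (1 + (t / u) ^ 2)⁻¹ = (t ^ 2 + u ^ 2) / (t ^ 2 + u ^ 2) ^ 2 := by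
        have := hne t
        field_simp
        ring
      rw [this]
      gcongr
      rw [abs_le]
      constructor <;> nlinarith [sq_nonneg t, sq_nonneg u]
    · rw [intervalIntegral.integral_const_mul, intervalIntegral.integral_const_mul,
        intervalIntegral.integral_comp_div (fun x : ℝ => (1 + x ^ 2)⁻¹) hu.ne',
        integral_inv_one_add_sq, zero_div, Real.arctan_zero, sub_zero, smul_eq_mul]
      have := (Real.arctan_lt_pi_div_two (T / u)).le
      have e : (u ^ 2)⁻¹ * (u * Real.arctan (T / u)) = u⁻¹ * Real.arctan (T / u) := by
        field_simp
      rw [e]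
      gcongr
  have hfin : (1 + Real.pi) / lam * u⁻¹ = 2 / lam * (u⁻¹ / 2) + 2 / lam * (u⁻¹ * (Real.pi / 2)) := by
    field_simp
  rw [hfin]
  refine le_trans (le_of_eq ?_) ((abs_sub _ _).trans (add_le_add hA hB))
  congr 1
  simp at hparts
  linarith

theorem integral_sin_mul_div_eq {lam u T : ℝ} (hlam : 0 < lam) (hT : 0 ≤ T) :
    ∫ t in (0 : ℝ)..T, Real.sin (lam * t) * (t / (t ^ 2 + u ^ 2)) =
      ∫ x in Ioi (0 : ℝ), Real.cos (u * x) *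
        ((lam - Real.exp (-T * x) * (x * Real.sin (lam * T) + lam * Real.cos (lam * T))) /
        (lam ^ 2 + x ^ 2)) := by
  have hdom : Integrable (Function.uncurry fun t x : ℝ => lam * t * Real.exp (-t * x))
      ((volume.restrict (Ioc 0 T)).prod (volume.restrict (Ioi 0))) := by
    refine (integrable_prod_iff (Measurable.aestronglyMeasurable
      (by unfold Function.uncurry; fun_prop))).2 ⟨?_, ?_⟩
    · filter_upwards [ae_restrict_mem measurableSet_Ioc] with t ht
      exact Integrable.const_mul (integrableOn_exp_mul_Ioi (neg_neg_of_pos ht.1) 0) (lam * t)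
    · refine (integrable_const lam).congr ?_
      filter_upwards [ae_restrict_mem measurableSet_Ioc] with t ht
      have ht0 : 0 < t := ht.1
      have : ∀ x : ℝ, ‖lam * t * Real.exp (-t * x)‖ = lam * t * Real.exp (-t * x) := fun x =>
        Real.norm_of_nonneg (by positivity)
      simp only [Function.uncurry, this]
      rw [integral_const_mul, integral_exp_mul_Ioi (neg_neg_of_pos ht0)]
      simp
      field_simp
  have hInt : Integrable (Function.uncurry fun t x : ℝ =>
      Real.cos (u * x) * (Real.sin (lam * t) * Real.exp (-t * x)))
      ((volume.restrict (uIoc 0 T)).prod (volume.restrict (Ioi 0))) := by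
    rw [uIoc_of_le hT]
    refine Integrable.mono' hdom (Measurable.aestronglyMeasurable
      (by unfold Function.uncurry; fun_prop)) ?_
    rw [Measure.prod_restrict]
    filter_upwards [ae_restrict_mem (measurableSet_Ioc.prod measurableSet_Ioi)] with p hp
    have ht0 : 0 < p.1 := hp.1.1
    simp only [Function.uncurry]
    rw [norm_mul, norm_mul, Real.norm_of_nonneg (Real.exp_pos _).le]
    refine (mul_le_of_le_one_left (by positivity) (Real.abs_cos_le_one _)).trans ?_
    gcongr
    refine (Real.abs_sin_le_abs).trans ?_
    rw [abs_of_pos (by positivity)]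
  have hswap := intervalIntegral_integral_swap hInt
  simp only [intervalIntegral.integral_const_mul, integral_sin_mul_exp hlam] at hswap
  rw [← hswap]
  refine intervalIntegral.integral_congr_ae (Eventually.of_forall fun t ht => ?_)
  rw [uIoc_of_le hT] at ht
  have : ∀ x : ℝ, Real.cos (u * x) * (Real.sin (lam * t) * Real.exp (-t * x)) =
      Real.sin (lam * t) * (Real.exp (-t * x) * Real.cos (u * x)) := fun x => by ring
  simp only [this]
  rw [integral_const_mul, integral_exp_mul_cos ht.1, add_comm (t ^ 2)]

theorem tendsto_integral_sin_mul_div {lam u : ℝ} (hlam : 0 < lam) (hu : 0 < u) :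
    Tendsto (fun T : ℝ => ∫ t in (0 : ℝ)..T, Real.sin (lam * t) * (t / (t ^ 2 + u ^ 2))) atTop
      (𝓝 (Real.pi / 2 * Real.exp (-lam * u))) := by
  have hlim := integral_cos_mul_div_sq_add_sq hlam u
  rw [abs_of_pos hu] at hlim
  rw [← hlim]
  refine Tendsto.congr' (f₁ := fun T : ℝ => ∫ x in Ioi (0 : ℝ), Real.cos (u * x) *
        ((lam - Real.exp (-T * x) * (x * Real.sin (lam * T) + lam * Real.cos (lam * T))) /
        (lam ^ 2 + x ^ 2))) ?_ ?_
  · filter_upwards [eventually_ge_atTop 0] with T hT using (integral_sin_mul_div_eq hlam hT).symm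
  have hsc : ∀ x T : ℝ, 0 < x → |x * Real.sin (lam * T) + lam * Real.cos (lam * T)| ≤ x + lam := by
    intro x T hx
    refine (abs_add_le _ _).trans (add_le_add ?_ ?_)
    · rw [abs_mul, abs_of_pos hx]
      exact mul_le_of_le_one_right hx.le (Real.abs_sin_le_one _)
    · rw [abs_mul, abs_of_pos hlam]
      exact mul_le_of_le_one_right hlam.le (Real.abs_cos_le_one _)
  refine tendsto_integral_filter_of_dominated_convergence
    (fun x => (2 * lam + 1) / lam * (lam / (lam ^ 2 + x ^ 2)))
    (Eventually.of_forall fun T => Measurable.aestronglyMeasurable (by fun_prop)) ?_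
    ((integrable_div_sq_add_sq hlam).integrableOn.const_mul _) ?_
  · filter_upwards [eventually_ge_atTop 1] with T hT
    filter_upwards [ae_restrict_mem measurableSet_Ioi] with x hx
    have hx0 : 0 < x := hx
    have hden : 0 < lam ^ 2 + x ^ 2 := by positivity
    rw [norm_mul]
    refine (mul_le_of_le_one_left (norm_nonneg _) (Real.abs_cos_le_one _)).trans ?_
    have e : (2 * lam + 1) / lam * (lam / (lam ^ 2 + x ^ 2)) = (2 * lam + 1) / (lam ^ 2 + x ^ 2) := by
      field_simp
    rw [e, norm_div, Real.norm_of_nonneg hden.le]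
    gcongr
    refine (norm_sub_le _ _).trans ?_
    rw [norm_mul, Real.norm_of_nonneg hlam.le, Real.norm_of_nonneg (Real.exp_pos _).le]
    have h1 : Real.exp (-T * x) * ‖x * Real.sin (lam * T) + lam * Real.cos (lam * T)‖ ≤
        Real.exp (-x) * (x + lam) := by
      refine mul_le_mul (Real.exp_le_exp.2 (by nlinarith)) (hsc x T hx0) (norm_nonneg _)
        (Real.exp_pos _).le
    have h2 : Real.exp (-x) * (x + lam) ≤ 1 + lam := by
      have h3 : Real.exp (-x) ≤ 1 := Real.exp_le_one_iff.2 (by linarith)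
      have h4 : Real.exp (-x) * x ≤ 1 := by
        rw [Real.exp_neg, inv_mul_le_iff₀ (Real.exp_pos _)]
        linarith [Real.add_one_le_exp x]
      nlinarith
    linarith
  · filter_upwards [ae_restrict_mem measurableSet_Ioi] with x hx
    have hx0 : 0 < x := hx
    have h0 : Tendsto (fun T : ℝ => Real.exp (-T * x) *
        (x * Real.sin (lam * T) + lam * Real.cos (lam * T))) atTop (𝓝 0) := by
      have he : Tendsto (fun T : ℝ => Real.exp (-T * x)) atTop (𝓝 0) :=
        Real.tendsto_exp_atBot.comp (tendsto_neg_atTop_atBot.atBot_mul_const hx0)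
      refine he.zero_mul_isBoundedUnder_le ?_
      exact isBoundedUnder_of ⟨x + lam, fun T => hsc x T hx0⟩
    have h1 := ((h0.const_sub lam).div_const (lam ^ 2 + x ^ 2)).const_mul (Real.cos (u * x))
    rwa [sub_zero] at h1

theorem integrableOn_inv_mul_inv_log_sq_add_sq {c : ℝ} (hc : 0 < c) :
    IntegrableOn (fun u : ℝ => u⁻¹ * (Real.log u ^ 2 + c ^ 2)⁻¹) (Ioi 0) := by
  have h := integrableOn_image_iff_integrableOn_abs_deriv_smul (s := univ) (f := Real.exp)
    (f' := Real.exp) MeasurableSet.univ (fun x _ => (Real.hasDerivAt_exp x).hasDerivWithinAt)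
    Real.exp_injective.injOn (fun u : ℝ => u⁻¹ * (Real.log u ^ 2 + c ^ 2)⁻¹)
  rw [image_univ, Real.range_exp] at h
  rw [h, integrableOn_univ]
  refine ((integrable_div_sq_add_sq hc).const_mul c⁻¹).congr (Eventually.of_forall fun x => ?_)
  have := Real.exp_pos x
  simp only [Real.abs_exp, Real.log_exp, smul_eq_mul]
  field_simp
  rw [add_comm]

theorem integral_sin_div_log_sq {lam T : ℝ} (hT : 0 ≤ T) :
    ∫ t in (0 : ℝ)..T, Real.sin (lam * t) / ((Real.log t) ^ 2 + Real.pi ^ 2 / 4) =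
      2 / Real.pi * ((∫ t in (0 : ℝ)..T, Real.sin (lam * t) * (t / (t ^ 2 + 1 ^ 2))) +
        ∫ u in Ioi (0 : ℝ), (Real.log u ^ 2 + Real.pi ^ 2)⁻¹ *
          ∫ t in (0 : ℝ)..T, Real.sin (lam * t) * (t / (t ^ 2 + u ^ 2))) := by
  have hpi := Real.pi_pos
  have hInt : Integrable (Function.uncurry fun t u : ℝ =>
      (Real.log u ^ 2 + Real.pi ^ 2)⁻¹ * (Real.sin (lam * t) * (t / (t ^ 2 + u ^ 2))))
      ((volume.restrict (uIoc 0 T)).prod (volume.restrict (Ioi 0))) := by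
    rw [uIoc_of_le hT]
    refine Integrable.mono' ((integrable_const (1 / 2 : ℝ)).mul_prod
      (integrableOn_inv_mul_inv_log_sq_add_sq hpi)) (Measurable.aestronglyMeasurable
      (by unfold Function.uncurry; fun_prop)) ?_
    rw [Measure.prod_restrict]
    filter_upwards [ae_restrict_mem (measurableSet_Ioc.prod measurableSet_Ioi)] with p hp
    have ht0 : 0 < p.1 := hp.1.1
    have hu0 : 0 < p.2 := hp.2
    simp only [Function.uncurry]
    rw [norm_mul, norm_mul, Real.norm_of_nonneg (by positivity),
      Real.norm_of_nonneg (r := p.1 / _) (by positivity)]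
    have h1 : p.1 / (p.1 ^ 2 + p.2 ^ 2) ≤ 1 / 2 * p.2⁻¹ := by
      rw [div_le_iff₀ (by positivity)]
      field_simp
      nlinarith [sq_nonneg (p.1 - p.2)]
    have h2 := (mul_le_of_le_one_left (by positivity) (Real.abs_sin_le_one (lam * p.1))).trans h1
    calc _ ≤ (Real.log p.2 ^ 2 + Real.pi ^ 2)⁻¹ * (1 / 2 * p.2⁻¹) :=
          mul_le_mul_of_nonneg_left h2 (by positivity)
      _ = _ := by ring
  have hswap := intervalIntegral_integral_swap hInt
  simp only [intervalIntegral.integral_const_mul] at hswap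
  rw [← hswap, ← intervalIntegral.integral_add, ← intervalIntegral.integral_const_mul]
  · refine intervalIntegral.integral_congr_ae (Eventually.of_forall fun t ht => ?_)
    rw [uIoc_of_le hT] at ht
    have : ∀ u : ℝ, (Real.log u ^ 2 + Real.pi ^ 2)⁻¹ * (Real.sin (lam * t) * (t / (t ^ 2 + u ^ 2))) =
        Real.sin (lam * t) * (t / (t ^ 2 + u ^ 2) * (Real.log u ^ 2 + Real.pi ^ 2)⁻¹) :=
      fun u => by ring
    simp only [this]
    rw [integral_const_mul, integral_div_sq_add_sq_mul_inv_log ht.1, one_pow, ← mul_add]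
    rw [add_sub_cancel]
    field_simp
  · refine Continuous.intervalIntegrable ?_ _ _
    have : ∀ t : ℝ, t ^ 2 + (1 : ℝ) ^ 2 ≠ 0 := fun t => by positivity
    fun_prop (disch := assumption)
  · rw [intervalIntegrable_iff]
    exact hInt.integral_prod_left

theorem stmt13 (lam : ℝ) (hlam : 0 < lam) :
    Tendsto
      (fun T : ℝ => ∫ t in (0 : ℝ)..T, Real.sin (lam * t) / ((Real.log t) ^ 2 + Real.pi ^ 2 / 4))
      atTop (nhds (W lam + Real.exp (-lam))) := by
  have hpi := Real.pi_pos
  have h1 := tendsto_integral_sin_mul_div hlam one_pos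
  have h2 : Tendsto (fun T : ℝ => ∫ u in Ioi (0 : ℝ), (Real.log u ^ 2 + Real.pi ^ 2)⁻¹ *
      ∫ t in (0 : ℝ)..T, Real.sin (lam * t) * (t / (t ^ 2 + u ^ 2))) atTop
      (𝓝 (∫ u in Ioi (0 : ℝ), (Real.log u ^ 2 + Real.pi ^ 2)⁻¹ *
        (Real.pi / 2 * Real.exp (-lam * u)))) := by
    refine tendsto_integral_filter_of_dominated_convergence
      (fun u => (1 + Real.pi) / lam * (u⁻¹ * (Real.log u ^ 2 + Real.pi ^ 2)⁻¹)) ?_ ?_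
      ((integrableOn_inv_mul_inv_log_sq_add_sq hpi).const_mul _) ?_
    · refine Eventually.of_forall fun T => AEStronglyMeasurable.mul
        (Measurable.aestronglyMeasurable (by fun_prop)) (StronglyMeasurable.aestronglyMeasurable ?_)
      have hm : StronglyMeasurable (Function.uncurry fun u t : ℝ =>
          Real.sin (lam * t) * (t / (t ^ 2 + u ^ 2))) :=
        Measurable.stronglyMeasurable (by unfold Function.uncurry; fun_prop)
      unfold intervalIntegral
      exact hm.integral_prod_right.sub hm.integral_prod_right
    · filter_upwards [eventually_ge_atTop 0] with T hT
      filter_upwards [ae_restrict_mem measurableSet_Ioi] with u hu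
      rw [norm_mul, Real.norm_of_nonneg (by positivity)]
      have := abs_integral_sin_mul_div_le hlam hu hT
      calc _ ≤ (Real.log u ^ 2 + Real.pi ^ 2)⁻¹ * ((1 + Real.pi) / lam * u⁻¹) := by
            gcongr
            exact this
        _ = _ := by ring
    · filter_upwards [ae_restrict_mem measurableSet_Ioi] with u hu
      exact (tendsto_integral_sin_mul_div hlam hu).const_mul _
  have h3 := (h1.add h2).const_mul (2 / Real.pi)
  have hval : 2 / Real.pi * (Real.pi / 2 * Real.exp (-lam * 1) +
      ∫ u in Ioi (0 : ℝ), (Real.log u ^ 2 + Real.pi ^ 2)⁻¹ *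
        (Real.pi / 2 * Real.exp (-lam * u))) = W lam + Real.exp (-lam) := by
    have : ∀ u : ℝ, (Real.log u ^ 2 + Real.pi ^ 2)⁻¹ * (Real.pi / 2 * Real.exp (-lam * u)) =
        Real.pi / 2 * (Real.exp (-lam * u) / ((Real.log u) ^ 2 + Real.pi ^ 2)) := fun u => by ring
    simp only [this]
    rw [integral_const_mul, ← W, mul_one]
    field_simp
    ring
  rw [← hval]
  refine h3.congr' ?_
  filter_upwards [eventually_ge_atTop 0] with T hT using (integral_sin_div_log_sq hT).symm
end

section
/- For every λ > 0, W(λ) = (2/π) ∫_0^∞ (log t) cos(λt) / ((log t)² + π²/4) dt + e^{-λ}, where W(λ) = ∫_0^∞ e^{-λu}/((log u)² + π²) du and the cosine integral is a conditionally convergent improper integral. -/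
open Filter

open MeasureTheory Topology

/-- If `f` is holomorphic on the strip `0 ≤ im z ≤ b` and its integrals over vertical segments
decay, then its integrals along the two boundary lines agree asymptotically. -/
lemma tendsto_integral_re_strip_boundary {f : ℂ → ℂ} {b C : ℝ} (hb : 0 ≤ b)
    (hf : DifferentiableOn ℂ f {z : ℂ | 0 ≤ z.im ∧ z.im ≤ b})
    (hC : ∀ X : ℝ, X ≠ 0 → ‖∫ y in (0 : ℝ)..b, f (X + y * Complex.I)‖ ≤ C / |X|) :
    Tendsto (fun R : ℝ => ∫ x in (-R)..R, (f x - f (x + b * Complex.I)).re) atTop (𝓝 0) := by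
  have h0 : Continuous (fun x : ℝ => f x) :=
    hf.continuousOn.comp_continuous Complex.continuous_ofReal (fun x => by simp [hb])
  have h1 : Continuous (fun x : ℝ => f (x + b * Complex.I)) :=
    hf.continuousOn.comp_continuous (by fun_prop) (fun x => by simp [hb])
  have key (R : ℝ) : ∫ x in (-R)..R, (f x - f (x + b * Complex.I)).re =
      (Complex.I * ((∫ y in (0 : ℝ)..b, f ((-R : ℝ) + y * Complex.I)) -
        ∫ y in (0 : ℝ)..b, f (R + y * Complex.I))).re := by
    have H := Complex.integral_boundary_rect_eq_zero_of_differentiableOn f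
      ((-R : ℝ) : ℂ) ((R : ℂ) + b * Complex.I) (hf.mono (by
        intro z hz
        have := hz.2
        simpa [Set.uIcc_of_le hb] using this))
    simp only [Complex.ofReal_re, Complex.ofReal_im, Complex.add_re, Complex.add_im,
      Complex.mul_re, Complex.mul_im, Complex.I_re, Complex.I_im, mul_zero, mul_one, zero_mul,
      sub_zero, add_zero, zero_add, smul_eq_mul, Complex.ofReal_zero] at H
    have h2 := Complex.reCLM.intervalIntegral_comp_comm (μ := volume) (a := -R) (b := R)
      ((h0.sub h1).intervalIntegrable _ _)
    simp only [Complex.reCLM_apply, Pi.sub_apply] at h2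
    rw [h2, intervalIntegral.integral_sub (h0.intervalIntegrable _ _) (h1.intervalIntegrable _ _)]
    congr 1
    linear_combination H
  have hlim : Tendsto (fun R : ℝ => 2 * C / R) atTop (𝓝 0) := tendsto_const_nhds.div_atTop tendsto_id
  refine squeeze_zero_norm' ?_ hlim
  filter_upwards [eventually_gt_atTop 0] with R hR
  rw [key, Real.norm_eq_abs]
  refine (Complex.abs_re_le_norm _).trans ?_
  rw [norm_mul, Complex.norm_I, one_mul]
  refine (norm_sub_le _ _).trans ?_
  have a1 := hC (-R) (by linarith)
  have a2 := hC R hR.ne'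
  rw [abs_neg] at a1
  rw [abs_of_pos hR] at a1 a2
  calc _ ≤ C / R + C / R := add_le_add a1 a2
    _ = _ := by ring

/-- Pointwise form of the Jordan estimate on `[0, π]`. -/
lemma exp_neg_mul_sin_le {A y : ℝ} (hA : 0 ≤ A) (hy0 : 0 ≤ y) (hy : y ≤ Real.pi) :
    Real.exp (-(A * Real.sin y)) ≤
      Real.exp (-(2 / Real.pi * A) * y) + Real.exp (-(2 / Real.pi * A) * (Real.pi - y)) := by
  rcases le_total y (Real.pi / 2) with h | h
  · have := Real.mul_le_sin hy0 h
    have h3 : Real.exp (-(A * Real.sin y)) ≤ Real.exp (-(2 / Real.pi * A) * y) := by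
      apply Real.exp_le_exp.2
      nlinarith [mul_le_mul_of_nonneg_left this hA]
    linarith [Real.exp_pos (-(2 / Real.pi * A) * (Real.pi - y))]
  · have := Real.mul_le_sin (x := Real.pi - y) (by linarith) (by linarith)
    rw [Real.sin_pi_sub] at this
    have h3 : Real.exp (-(A * Real.sin y)) ≤
        Real.exp (-(2 / Real.pi * A) * (Real.pi - y)) := by
      apply Real.exp_le_exp.2
      nlinarith [mul_le_mul_of_nonneg_left this hA]
    linarith [Real.exp_pos (-(2 / Real.pi * A) * y)]

lemma integral_jordan_le {c b : ℝ} (hc : 0 < c) :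
    ∫ y in (0 : ℝ)..b, (Real.exp (-c * y) + Real.exp (-c * (Real.pi - y))) ≤
      (1 + Real.exp (-c * (Real.pi - b))) / c := by
  have hd (y : ℝ) : HasDerivAt
      (fun y => (-Real.exp (-c * y) + Real.exp (-c * (Real.pi - y))) / c)
      (Real.exp (-c * y) + Real.exp (-c * (Real.pi - y))) y := by
    have e1 := ((hasDerivAt_id y).const_mul (-c)).exp
    have e2 := (((hasDerivAt_id y).const_sub Real.pi).const_mul (-c)).exp
    refine ((e1.neg.add e2).div_const c).congr_deriv ?_
    simp only [id]
    field_simp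
  rw [intervalIntegral.integral_eq_sub_of_hasDerivAt (fun y _ => hd y)
    (Continuous.intervalIntegrable (by fun_prop) _ _), div_sub_div_same]
  gcongr
  simp only [mul_zero, Real.exp_zero]
  linarith [Real.exp_pos (-c * b), Real.exp_pos (-c * (Real.pi - 0))]

lemma abs_re_le_norm_sub_mul_I (X y α : ℝ) :
    |X| ≤ ‖(X : ℂ) + y * Complex.I - α * Complex.I‖ := by
  simpa using Complex.abs_re_le_norm ((X : ℂ) + y * Complex.I - α * Complex.I)

/-- The function `exp (i λ z)` in the logarithmic coordinate `z = exp s`, with its Jacobian. -/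
noncomputable def logExpKernel (lam : ℝ) (s : ℂ) : ℂ :=
  Complex.exp (lam * Complex.I * Complex.exp s) * Complex.exp s

lemma differentiable_logExpKernel (lam : ℝ) : Differentiable ℂ (logExpKernel lam) := by
  unfold logExpKernel; fun_prop

lemma norm_logExpKernel (lam X y : ℝ) :
    ‖logExpKernel lam (X + y * Complex.I)‖ =
      Real.exp X * Real.exp (-(lam * Real.exp X * Real.sin y)) := by
  rw [logExpKernel, norm_mul, Complex.norm_exp, Complex.norm_exp, mul_comm]
  simp [Complex.exp_re, Complex.exp_im]
  ring_nf

lemma norm_integral_logExpKernel_div_le {lam : ℝ} (hlam : 0 < lam) {b : ℝ} (hb : 0 ≤ b)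
    (hbpi : b ≤ Real.pi) (α : ℝ) {X : ℝ} (hX : X ≠ 0) :
    ‖∫ y in (0 : ℝ)..b, logExpKernel lam (X + y * Complex.I) /
      (X + y * Complex.I - α * Complex.I)‖ ≤ Real.pi / lam / |X| := by
  set c := 2 / Real.pi * (lam * Real.exp X) with hc
  have hpi := Real.pi_pos
  have hcpos : 0 < c := by positivity
  have hXp : 0 < |X| := abs_pos.2 hX
  have h := intervalIntegral.norm_integral_le_of_norm_le (μ := volume) hb
    (f := fun y : ℝ => logExpKernel lam (X + y * Complex.I) /
      (X + y * Complex.I - α * Complex.I))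
    (g := fun y => Real.exp X / |X| * (Real.exp (-c * y) + Real.exp (-c * (Real.pi - y))))
    (Eventually.of_forall fun y hy => by
      rw [norm_div, norm_logExpKernel]
      calc _ ≤ Real.exp X * (Real.exp (-c * y) + Real.exp (-c * (Real.pi - y))) / |X| := by
            gcongr
            · exact exp_neg_mul_sin_le (by positivity) hy.1.le (hy.2.trans hbpi)
            · exact abs_re_le_norm_sub_mul_I X y α
        _ = _ := by ring)
    (Continuous.intervalIntegrable (by fun_prop) _ _)
  refine h.trans ?_
  rw [intervalIntegral.integral_const_mul]
  calc _ ≤ Real.exp X / |X| * ((1 + Real.exp (-c * (Real.pi - b))) / c) := by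
        gcongr; exact integral_jordan_le hcpos
    _ ≤ Real.exp X / |X| * ((1 + 1) / c) := by
        gcongr
        apply Real.exp_le_one_iff.2
        nlinarith
    _ = _ := by rw [hc]; have := Real.exp_pos X; field_simp; norm_num

lemma logExpKernel_ofReal (lam x : ℝ) :
    logExpKernel lam x = (Real.exp x * Real.cos (lam * Real.exp x) : ℝ) +
      (Real.exp x * Real.sin (lam * Real.exp x) : ℝ) * Complex.I := by
  have : (lam : ℂ) * Complex.I * Complex.exp x = ((lam * Real.exp x : ℝ) : ℂ) * Complex.I := by
    push_cast; ring
  rw [logExpKernel, this, Complex.exp_mul_I]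
  push_cast
  ring

lemma logExpKernel_add_pi_mul_I (lam x : ℝ) :
    logExpKernel lam (x + Real.pi * Complex.I) =
      -((Real.exp x * Real.cos (lam * Real.exp x) : ℝ) -
      (Real.exp x * Real.sin (lam * Real.exp x) : ℝ) * Complex.I) := by
  have : (lam : ℂ) * Complex.I * Complex.exp (x + Real.pi * Complex.I) =
      ((-(lam * Real.exp x) : ℝ) : ℂ) * Complex.I := by
    rw [Complex.exp_add, Complex.exp_pi_mul_I]
    push_cast; ring
  rw [logExpKernel, this, Complex.exp_mul_I, Complex.exp_add, Complex.exp_pi_mul_I,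
    ← Complex.ofReal_cos, ← Complex.ofReal_sin, Real.cos_neg, Real.sin_neg]
  push_cast
  ring

lemma logExpKernel_add_pi_div_two_mul_I (lam x : ℝ) :
    logExpKernel lam (x + (Real.pi / 2 : ℝ) * Complex.I) =
      (Real.exp x * Real.exp (-lam * Real.exp x) : ℝ) * Complex.I := by
  have h : Complex.exp (x + (Real.pi / 2 : ℝ) * Complex.I) = Complex.exp x * Complex.I := by
    rw [Complex.exp_add]
    push_cast
    rw [Complex.exp_pi_div_two_mul_I]
  have : (lam : ℂ) * Complex.I * (Complex.exp x * Complex.I) =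
      ((-lam * Real.exp x : ℝ) : ℂ) := by
    push_cast; linear_combination (lam * Complex.exp x) * Complex.I_mul_I
  rw [logExpKernel, h, this]
  push_cast
  ring

lemma add_mul_I_div_re (a b c d : ℝ) :
    (((a : ℂ) + b * Complex.I) / (c + d * Complex.I)).re = (a * c + b * d) / (c ^ 2 + d ^ 2) := by
  simp [Complex.div_re, Complex.normSq_apply]
  ring

lemma tendsto_rotation_identity {lam : ℝ} (hlam : 0 < lam) :
    Tendsto (fun R : ℝ => ∫ x in (-R)..R,
      ((Real.exp x * Real.cos (lam * Real.exp x) * x +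
        Real.exp x * Real.sin (lam * Real.exp x) * (Real.pi / 2)) / (x ^ 2 + (Real.pi / 2) ^ 2) -
      Real.exp x * Real.exp (-lam * Real.exp x) * Real.pi / (x ^ 2 + Real.pi ^ 2)))
      atTop (𝓝 0) := by
  have hpi := Real.pi_pos
  have hf : DifferentiableOn ℂ
      (fun s => logExpKernel lam s / (s - (-(Real.pi / 2) : ℝ) * Complex.I))
      {z : ℂ | 0 ≤ z.im ∧ z.im ≤ Real.pi / 2} := by
    refine (differentiable_logExpKernel lam).differentiableOn.div (by fun_prop) ?_
    intro z hz h0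
    have := congrArg Complex.im h0
    simp at this
    linarith [hz.1]
  refine (tendsto_integral_re_strip_boundary (by positivity) hf fun X hX =>
    norm_integral_logExpKernel_div_le hlam (by positivity) (by linarith) _ hX).congr fun R => ?_
  refine intervalIntegral.integral_congr fun x _ => ?_
  rw [logExpKernel_add_pi_div_two_mul_I, logExpKernel_ofReal, Complex.sub_re]
  congr 1
  · rw [← add_mul_I_div_re]
    push_cast
    ring_nf
  · have := add_mul_I_div_re 0 (Real.exp x * Real.exp (-lam * Real.exp x)) x Real.pi
    rw [zero_mul, zero_add] at this
    rw [← this]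
    push_cast
    ring_nf

lemma logExpKernel_pi_div_two_mul_I (lam : ℝ) :
    logExpKernel lam ((Real.pi / 2 : ℝ) * Complex.I) = Real.exp (-lam) * Complex.I := by
  simpa using logExpKernel_add_pi_div_two_mul_I lam 0

lemma tendsto_residue_identity {lam : ℝ} (hlam : 0 < lam) :
    Tendsto (fun R : ℝ => ∫ x in (-R)..R,
      (2 * ((Real.exp x * Real.cos (lam * Real.exp x) * x -
        Real.exp x * Real.sin (lam * Real.exp x) * (Real.pi / 2)) / (x ^ 2 + (Real.pi / 2) ^ 2)) +
      Real.exp (-lam) * Real.pi / (x ^ 2 + (Real.pi / 2) ^ 2)))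
      atTop (𝓝 0) := by
  have hpi := Real.pi_pos
  set a : ℂ := (Real.pi / 2 : ℝ) * Complex.I with ha
  have hf : Differentiable ℂ (dslope (logExpKernel lam) a) := by
    rw [← differentiableOn_univ, Complex.differentiableOn_dslope univ_mem]
    exact (differentiable_logExpKernel lam).differentiableOn
  have hne {s : ℂ} (h : s ≠ a) : dslope (logExpKernel lam) a s =
      logExpKernel lam s / (s - a) - Real.exp (-lam) * Complex.I / (s - a) := by
    rw [dslope_of_ne _ h, slope_def_field, sub_div, ha, logExpKernel_pi_div_two_mul_I]
  have hneX {X y : ℝ} (hX : X ≠ 0) : (X : ℂ) + y * Complex.I - a ≠ 0 := fun h => hX (by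
    simpa [ha] using congrArg Complex.re h)
  have hC (X : ℝ) (hX : X ≠ 0) :
      ‖∫ y in (0 : ℝ)..Real.pi, dslope (logExpKernel lam) a (X + y * Complex.I)‖ ≤
        (Real.pi / lam + Real.exp (-lam) * Real.pi) / |X| := by
    have hXp : 0 < |X| := abs_pos.2 hX
    have e : ∀ y : ℝ, dslope (logExpKernel lam) a (X + y * Complex.I) =
        logExpKernel lam (X + y * Complex.I) / (X + y * Complex.I - a) -
        Real.exp (-lam) * Complex.I / (X + y * Complex.I - a) :=
      fun y => hne (sub_ne_zero.1 (hneX hX))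
    simp_rw [e]
    have hk := (differentiable_logExpKernel lam).continuous
    rw [intervalIntegral.integral_sub, add_div]
    · refine (norm_sub_le _ _).trans <| add_le_add
        (norm_integral_logExpKernel_div_le hlam hpi.le le_rfl _ hX) ?_
      refine (intervalIntegral.norm_integral_le_of_norm_le_const
        (C := Real.exp (-lam) / |X|) fun y _ => ?_).trans_eq ?_
      · rw [norm_div, norm_mul, Complex.norm_I, mul_one, Complex.norm_real, Real.norm_eq_abs,
          Real.abs_exp]
        gcongr
        exact abs_re_le_norm_sub_mul_I X y _
      · rw [sub_zero, abs_of_pos hpi]; ring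
    · exact Continuous.intervalIntegrable
        (Continuous.div (by fun_prop) (by fun_prop) fun y => hneX hX) _ _
    · exact Continuous.intervalIntegrable
        (Continuous.div (by fun_prop) (by fun_prop) fun y => hneX hX) _ _
  refine (tendsto_integral_re_strip_boundary hpi.le hf.differentiableOn hC).congr fun R => ?_
  refine intervalIntegral.integral_congr fun x _ => ?_
  have i1 : (x : ℂ) ≠ a := fun h => by
    have := congrArg Complex.im h
    simp [ha] at this
    linarith
  have i2 : (x : ℂ) + Real.pi * Complex.I ≠ a := fun h => by
    have := congrArg Complex.im h
    simp [ha] at this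
    linarith
  rw [hne i1, hne i2, logExpKernel_ofReal, logExpKernel_add_pi_mul_I]
  set p := Real.exp x * Real.cos (lam * Real.exp x)
  set q := Real.exp x * Real.sin (lam * Real.exp x)
  have d1 : (x : ℂ) - a = (x : ℂ) + (-(Real.pi / 2) : ℝ) * Complex.I := by
    rw [ha]; push_cast; ring
  have d2 : (x : ℂ) + Real.pi * Complex.I - a = (x : ℂ) + (Real.pi / 2 : ℝ) * Complex.I := by
    rw [ha]; push_cast; ring
  have n1 : -((p : ℂ) - q * Complex.I) = (-p : ℝ) + (q : ℝ) * Complex.I := by push_cast; ring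
  have n2 : (Real.exp (-lam) : ℂ) * Complex.I =
    (0 : ℝ) + (Real.exp (-lam) : ℝ) * Complex.I := by push_cast; ring
  rw [d1, d2, n1, n2, Complex.sub_re, Complex.sub_re, Complex.sub_re]
  simp only [add_mul_I_div_re]
  ring

/-- The integral of a bounded function over `(0, exp R)` agrees asymptotically with its
logarithmic substitution over `(-R, R)`. -/
lemma tendsto_integral_sub_integral_comp_exp {g : ℝ → ℝ} {M : ℝ}
    (hg : ContinuousOn g (Set.Ioi 0)) (hM : ∀ t, 0 < t → |g t| ≤ M) :
    Tendsto (fun R : ℝ => (∫ t in (0 : ℝ)..Real.exp R, g t) -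
      ∫ x in (-R)..R, g (Real.exp x) * Real.exp x) atTop (𝓝 0) := by
  have hint (b : ℝ) (hb : 0 ≤ b) : IntervalIntegrable g volume 0 b := by
    rw [intervalIntegrable_iff_integrableOn_Ioc_of_le hb]
    refine Integrable.mono' (integrableOn_const (C := M) (by simp))
      ((hg.mono fun x hx => hx.1).aestronglyMeasurable measurableSet_Ioc) ?_
    exact (ae_restrict_iff' measurableSet_Ioc).2 (Eventually.of_forall fun t ht => hM t ht.1)
  have key (R : ℝ) : (∫ t in (0 : ℝ)..Real.exp R, g t) -
      ∫ x in (-R)..R, g (Real.exp x) * Real.exp x = ∫ t in (0 : ℝ)..Real.exp (-R), g t := by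
    have h := intervalIntegral.integral_comp_mul_deriv' (a := -R) (b := R) (g := g)
      (fun x _ => Real.hasDerivAt_exp x) Real.continuous_exp.continuousOn
      (hg.mono (by rintro _ ⟨x, -, rfl⟩; exact Real.exp_pos x))
    simp only [Function.comp_apply] at h
    have e := intervalIntegral.integral_interval_sub_left (hint _ (Real.exp_pos R).le)
      (hint _ (Real.exp_pos (-R)).le)
    rw [h, ← e, sub_sub_cancel]
  simp_rw [key]
  have hlim : Tendsto (fun R : ℝ => M * Real.exp (-R)) atTop (𝓝 0) := by
    simpa using Real.tendsto_exp_neg_atTop_nhds_zero.const_mul M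
  refine squeeze_zero_norm (fun R => ?_) hlim
  refine (intervalIntegral.norm_integral_le_of_norm_le_const fun t ht => hM t ?_).trans_eq ?_
  · rw [Set.uIoc_of_le (Real.exp_pos _).le] at ht
    exact ht.1
  · rw [sub_zero, Real.abs_exp]

lemma tendsto_integral_inv_sq_add_sq :
    Tendsto (fun R : ℝ => ∫ x in (-R)..R, 1 / (x ^ 2 + (Real.pi / 2) ^ 2)) atTop (𝓝 2) := by
  have hpi := Real.pi_pos
  have e (R : ℝ) : ∫ x in (-R)..R, 1 / (x ^ 2 + (Real.pi / 2) ^ 2) =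
      (Real.pi / 2)⁻¹ * (Real.arctan (R / (Real.pi / 2)) + Real.arctan (R / (Real.pi / 2))) := by
    have := integral_inv_sq_add_sq (a := -R) (b := R) (c := Real.pi / 2) (by positivity)
    rw [neg_div, Real.arctan_neg, sub_neg_eq_add] at this
    rw [← this]
    exact intervalIntegral.integral_congr fun x _ => by simp [add_comm]
  simp_rw [e]
  have h : Tendsto (fun R : ℝ => Real.arctan (R / (Real.pi / 2))) atTop (𝓝 (Real.pi / 2)) :=
    (tendsto_nhds_of_tendsto_nhdsWithin Real.tendsto_arctan_atTop).comp
      (tendsto_id.atTop_div_const (by positivity))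
  convert (h.add h).const_mul (Real.pi / 2)⁻¹ using 2
  field_simp
  norm_num

lemma tendsto_integral_exp_div_log_sq {lam : ℝ} (hlam : 0 < lam) :
    Tendsto (fun R : ℝ => ∫ x in (-R)..R,
      Real.exp x * Real.exp (-lam * Real.exp x) / (x ^ 2 + Real.pi ^ 2)) atTop (𝓝 (W lam)) := by
  have hpi := Real.pi_pos
  set g : ℝ → ℝ := fun u => Real.exp (-lam * u) / ((Real.log u) ^ 2 + Real.pi ^ 2) with hgdef
  have hg : ContinuousOn g (Set.Ioi 0) := by
    refine ContinuousOn.div (by fun_prop)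
      (((Real.continuousOn_log.mono fun x hx => (ne_of_gt hx : x ≠ 0)).pow 2).add
        continuousOn_const) fun x _ => by positivity
  have hb (u : ℝ) : |g u| ≤ Real.exp (-lam * u) / Real.pi ^ 2 := by
    rw [abs_of_nonneg (by positivity)]
    simp only [hgdef]
    gcongr
    nlinarith [sq_nonneg (Real.log u)]
  have hM (u : ℝ) (hu : 0 < u) : |g u| ≤ 1 / Real.pi ^ 2 := by
    refine (hb u).trans ?_
    gcongr
    exact Real.exp_le_one_iff.2 (by nlinarith)
  have hint : IntegrableOn g (Set.Ioi 0) :=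
    Integrable.mono' ((integrableOn_exp_mul_Ioi (neg_lt_zero.2 hlam) 0).div_const _)
      (hg.aestronglyMeasurable measurableSet_Ioi) (Eventually.of_forall hb)
  have h1 := intervalIntegral_tendsto_integral_Ioi 0 hint Real.tendsto_exp_atTop
  have h2 := h1.sub (tendsto_integral_sub_integral_comp_exp hg hM)
  rw [sub_zero] at h2
  refine h2.congr fun R => ?_
  rw [sub_sub_cancel]
  refine intervalIntegral.integral_congr fun x _ => ?_
  simp only [hgdef, Real.log_exp]
  ring

lemma tendsto_integral_log_mul_cos_sub (lam : ℝ) :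
    Tendsto (fun R : ℝ => (∫ t in (0 : ℝ)..Real.exp R,
        Real.log t * Real.cos (lam * t) / ((Real.log t) ^ 2 + Real.pi ^ 2 / 4)) -
      ∫ x in (-R)..R, Real.exp x * Real.cos (lam * Real.exp x) * x / (x ^ 2 + (Real.pi / 2) ^ 2))
      atTop (𝓝 0) := by
  have hpi := Real.pi_pos
  have hlog : ContinuousOn Real.log (Set.Ioi 0) :=
    Real.continuousOn_log.mono fun x hx => (ne_of_gt hx : x ≠ 0)
  refine (tendsto_integral_sub_integral_comp_exp (M := 1)
    (g := fun t => Real.log t * Real.cos (lam * t) / ((Real.log t) ^ 2 + Real.pi ^ 2 / 4))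
    ?_ fun t _ => ?_).congr fun R => ?_
  · exact ContinuousOn.div (hlog.mul (by fun_prop)) ((hlog.pow 2).add continuousOn_const)
      fun x _ => by positivity
  · rw [abs_div, abs_mul, abs_of_pos (a := Real.log t ^ 2 + _) (by positivity),
      div_le_one (by positivity), ← sq_abs (Real.log t)]
    have h1 := Real.abs_cos_le_one (lam * t)
    have h2 := abs_nonneg (Real.log t)
    nlinarith [mul_le_mul_of_nonneg_left h1 h2, Real.pi_gt_three,
      sq_nonneg (|Real.log t| - 1 / 2)]
  · congr 1
    refine intervalIntegral.integral_congr fun x _ => ?_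
    simp only [Real.log_exp]
    ring

theorem stmt14 (lam : ℝ) (hlam : 0 < lam) :
    Tendsto
      (fun T : ℝ => 2 / Real.pi *
        ∫ t in (0 : ℝ)..T,
          Real.log t * Real.cos (lam * t) / ((Real.log t) ^ 2 + Real.pi ^ 2 / 4))
      atTop (nhds (W lam - Real.exp (-lam))) := by
  have hpi := Real.pi_pos
  have hD (x : ℝ) : x ^ 2 + (Real.pi / 2) ^ 2 ≠ 0 := by positivity
  have hE (x : ℝ) : x ^ 2 + Real.pi ^ 2 ≠ 0 := by positivity
  set c : ℝ → ℝ := fun x =>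
    Real.exp x * Real.cos (lam * Real.exp x) * x / (x ^ 2 + (Real.pi / 2) ^ 2) with hc
  set s : ℝ → ℝ := fun x =>
    Real.exp x * Real.sin (lam * Real.exp x) * (Real.pi / 2) / (x ^ 2 + (Real.pi / 2) ^ 2) with hs
  set w : ℝ → ℝ := fun x =>
    Real.exp x * Real.exp (-lam * Real.exp x) / (x ^ 2 + Real.pi ^ 2) with hw
  set l : ℝ → ℝ := fun x => 1 / (x ^ 2 + (Real.pi / 2) ^ 2) with hl
  have ic (R : ℝ) : IntervalIntegrable c volume (-R) R :=
    (Continuous.div (by fun_prop) (by fun_prop) hD).intervalIntegrable _ _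
  have is (R : ℝ) : IntervalIntegrable s volume (-R) R :=
    (Continuous.div (by fun_prop) (by fun_prop) hD).intervalIntegrable _ _
  have iw (R : ℝ) : IntervalIntegrable w volume (-R) R :=
    (Continuous.div (by fun_prop) (by fun_prop) hE).intervalIntegrable _ _
  have il (R : ℝ) : IntervalIntegrable l volume (-R) R :=
    (Continuous.div (by fun_prop) (by fun_prop) hD).intervalIntegrable _ _
  have h1 : Tendsto (fun R : ℝ => (∫ x in (-R)..R, c x) + (∫ x in (-R)..R, s x) -
      Real.pi * ∫ x in (-R)..R, w x) atTop (𝓝 0) := by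
    refine (tendsto_rotation_identity hlam).congr fun R => ?_
    rw [← intervalIntegral.integral_const_mul, ← intervalIntegral.integral_add (ic R) (is R),
      ← intervalIntegral.integral_sub ((ic R).add (is R)) ((iw R).const_mul _)]
    refine intervalIntegral.integral_congr fun x _ => ?_
    simp only [hc, hs, hw]
    ring
  have h2 : Tendsto (fun R : ℝ => 2 * ((∫ x in (-R)..R, c x) - (∫ x in (-R)..R, s x)) +
      Real.exp (-lam) * Real.pi * ∫ x in (-R)..R, l x) atTop (𝓝 0) := by
    refine (tendsto_residue_identity hlam).congr fun R => ?_
    rw [← intervalIntegral.integral_const_mul, ← intervalIntegral.integral_sub (ic R) (is R),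
      ← intervalIntegral.integral_const_mul,
      ← intervalIntegral.integral_add (((ic R).sub (is R)).const_mul _) ((il R).const_mul _)]
    refine intervalIntegral.integral_congr fun x _ => ?_
    simp only [hc, hs, hl]
    ring
  have h3 : Tendsto (fun R : ℝ => ∫ x in (-R)..R, w x) atTop (𝓝 (W lam)) :=
    tendsto_integral_exp_div_log_sq hlam
  have h4 : Tendsto (fun R : ℝ => ∫ x in (-R)..R, l x) atTop (𝓝 2) :=
    tendsto_integral_inv_sq_add_sq
  have h5 : Tendsto (fun R : ℝ => (∫ t in (0 : ℝ)..Real.exp R,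
      Real.log t * Real.cos (lam * t) / ((Real.log t) ^ 2 + Real.pi ^ 2 / 4)) -
      ∫ x in (-R)..R, c x) atTop (𝓝 0) := tendsto_integral_log_mul_cos_sub lam
  have h6 := (((h5.const_mul (2 / Real.pi)).add (h1.const_mul (1 / Real.pi))).add
    (h2.const_mul (1 / (2 * Real.pi)))).add (h3.sub (h4.const_mul (Real.exp (-lam) / 2)))
  have h7 : Tendsto (fun R : ℝ => 2 / Real.pi * ∫ t in (0 : ℝ)..Real.exp R,
      Real.log t * Real.cos (lam * t) / ((Real.log t) ^ 2 + Real.pi ^ 2 / 4))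
      atTop (𝓝 (W lam - Real.exp (-lam))) := by
    convert h6 using 2 with R
    · generalize (∫ t in (0 : ℝ)..Real.exp R,
        Real.log t * Real.cos (lam * t) / ((Real.log t) ^ 2 + Real.pi ^ 2 / 4)) = J
      field_simp
      ring
    · ring
  refine (h7.comp Real.tendsto_log_atTop).congr' ?_
  filter_upwards [eventually_gt_atTop 0] with T hT
  simp only [Function.comp_apply, Real.exp_log hT]
end

section
/- For x > 0 and u ∈ ℝ, K₀(x√(2iu)) = (1/2) ∫_0^∞ exp(−y − i x² u/(2y)) · y^{-1} dy, where K₀ is the modified Bessel function of the second kind of order 0 and √ denotes the principal branch. -/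
open Filter Complex

/-- The modified Bessel function of the second kind of order 0, via
`K₀ z = ∫_0^∞ e^{-z cosh t} dt`, convergent for `Re z > 0` (and in particular
for `z = x√(2iu)`, which has `arg z = ±π/4`). -/
noncomputable def besselK0 (z : ℂ) : ℂ :=
  ∫ t in Set.Ioi (0 : ℝ), Complex.exp (-z * Real.cosh t)

open MeasureTheory Set Topology

/-- With `a = log (z / 2)`, the substitutions `y = exp s` and `s = t + a` turn
`exp (-besselPhase a s)` into the two integrands of the representation of `K₀ z`. -/
noncomputable def besselPhase (a ζ : ℂ) : ℂ := Complex.exp ζ + Complex.exp (2 * a - ζ)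

theorem besselPhase_re (a : ℂ) (s φ : ℝ) :
    (besselPhase a (s + φ * I)).re =
      Real.exp s * Real.cos φ + Real.exp (2 * a.re - s) * Real.cos (2 * a.im - φ) := by
  simp [besselPhase, Complex.exp_re]

theorem besselPhase_add_self (a t : ℂ) :
    besselPhase a (t + a) = 2 * Complex.exp a * Complex.cosh t := by
  rw [besselPhase, Complex.cosh, show 2 * a - (t + a) = a + -t by ring, Complex.exp_add,
    Complex.exp_add]
  ring

theorem continuous_besselPhase (a : ℂ) : Continuous (besselPhase a) := by
  unfold besselPhase; fun_prop

theorem differentiable_exp_neg_besselPhase (a : ℂ) :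
    Differentiable ℂ fun ζ => Complex.exp (-besselPhase a ζ) := by
  unfold besselPhase; fun_prop

theorem norm_exp_neg_besselPhase_le {a : ℂ} {s φ : ℝ} (h : 0 ≤ Real.cos (2 * a.im - φ)) :
    ‖Complex.exp (-besselPhase a (s + φ * I))‖ ≤ Real.exp (-(Real.exp s * Real.cos φ)) := by
  rw [Complex.norm_exp, neg_re, besselPhase_re, Real.exp_le_exp]
  have := mul_nonneg (Real.exp_nonneg (2 * a.re - s)) h
  linarith

theorem norm_exp_neg_besselPhase_le_reflected {a : ℂ} {s φ : ℝ} (h : 0 ≤ Real.cos φ) :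
    ‖Complex.exp (-besselPhase a (s + φ * I))‖ ≤
      Real.exp (-(Real.exp (2 * a.re - s) * Real.cos (2 * a.im - φ))) := by
  rw [Complex.norm_exp, neg_re, besselPhase_re, Real.exp_le_exp]
  have := mul_nonneg (Real.exp_nonneg s) h
  linarith

theorem integrable_exp_neg_mul_cosh {z : ℂ} (hz : 0 < z.re) :
    Integrable fun t : ℝ => Complex.exp (-z * Real.cosh t) := by
  refine (integrable_exp_neg_mul_sq (b := z.re / 4) (by positivity)).mono'
    (by fun_prop) (ae_of_all _ fun t => ?_)
  rw [Complex.norm_exp, Real.exp_le_exp]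
  have h1 := Real.quadratic_le_exp_of_nonneg (abs_nonneg t)
  have h2 : Real.exp |t| ≤ 2 * Real.cosh t := by
    rw [← Real.cosh_abs, Real.cosh_eq]
    have := Real.exp_pos (-|t|)
    linarith
  have h3 : t ^ 2 / 4 ≤ Real.cosh t := by
    rw [sq_abs] at h1
    have := abs_nonneg t
    linarith
  have h4 := mul_le_mul_of_nonneg_left h3 hz.le
  have h5 : (-z * (Real.cosh t : ℂ)).re = -(z.re * Real.cosh t) := by
    rw [mul_re, ofReal_re, ofReal_im]; simp
  rw [h5]
  linarith

theorem integral_exp_neg_mul_cosh {z : ℂ} (hz : 0 < z.re) :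
    ∫ t : ℝ, Complex.exp (-z * Real.cosh t) = 2 * besselK0 z := by
  have hi := integrable_exp_neg_mul_cosh hz
  have h1 : ∫ t in Iic (0 : ℝ), Complex.exp (-z * Real.cosh t) = besselK0 z := by
    have := integral_comp_neg_Iic (0 : ℝ) fun t : ℝ => Complex.exp (-z * Real.cosh t)
    simpa only [Real.cosh_neg, neg_zero, besselK0] using this
  rw [← intervalIntegral.integral_Iic_add_Ioi hi.integrableOn hi.integrableOn (b := 0), h1, two_mul]
  rfl

section Contour

variable {a : ℂ}

theorem abs_le_of_mem_uIoc_zero {b φ : ℝ} (h : φ ∈ uIoc 0 b) : |φ| ≤ |b| := by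
  simpa using abs_sub_left_of_mem_uIcc (uIoc_subset_uIcc h)

theorem cos_pos_of_mem_uIoc (ha : |a.im| ≤ Real.pi / 4) {φ : ℝ} (h : φ ∈ uIoc 0 a.im) :
    0 < Real.cos φ := by
  have := abs_le.1 ((abs_le_of_mem_uIoc_zero h).trans ha)
  have := Real.pi_pos
  exact Real.cos_pos_of_mem_Ioo ⟨by linarith, by linarith⟩

theorem cos_two_mul_sub_pos_of_mem_uIoc (ha : |a.im| ≤ Real.pi / 4) {φ : ℝ}
    (h : φ ∈ uIoc 0 a.im) (h0 : φ ≠ 0) : 0 < Real.cos (2 * a.im - φ) := by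
  have := abs_le.1 ha
  have := Real.pi_pos
  rcases mem_uIoc.1 h with h | h
  · exact Real.cos_pos_of_mem_Ioo ⟨by linarith, by linarith⟩
  · have := lt_of_le_of_ne h.2 h0
    exact Real.cos_pos_of_mem_Ioo ⟨by linarith, by linarith⟩

theorem tendsto_exp_neg_exp_mul {ι : Type*} {l : Filter ι} {f : ι → ℝ} (hf : Tendsto f l atTop)
    {c : ℝ} (hc : 0 < c) : Tendsto (fun i => Real.exp (-(Real.exp (f i) * c))) l (𝓝 0) :=
  Real.tendsto_exp_neg_atTop_nhds_zero.comp
    ((Real.tendsto_exp_atTop.comp hf).atTop_mul_const hc)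

theorem ae_ne_zero : ∀ᵐ φ : ℝ, φ ≠ 0 := by
  simp [ae_iff]

theorem tendsto_integral_vertical {l : Filter ℝ} [l.IsCountablyGenerated]
    (ha : |a.im| ≤ Real.pi / 4)
    (hl : ∀ φ ∈ uIoc 0 a.im, φ ≠ 0 →
      Tendsto (fun s : ℝ => Complex.exp (-besselPhase a (s + φ * I))) l (𝓝 0)) :
    Tendsto (fun s : ℝ => ∫ φ in (0 : ℝ)..a.im, Complex.exp (-besselPhase a (s + φ * I)))
      l (𝓝 0) := by
  have hc := continuous_besselPhase a
  have := intervalIntegral.tendsto_integral_filter_of_dominated_convergence (μ := volume)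
    (a := 0) (b := a.im) (l := l) (F := fun (s φ : ℝ) => Complex.exp (-besselPhase a (s + φ * I)))
    (f := fun _ => 0) (fun _ => 1)
    (Eventually.of_forall fun s => Continuous.aestronglyMeasurable (by fun_prop))
    (Eventually.of_forall fun s => ?_) intervalIntegrable_const ?_
  · simpa using this
  · filter_upwards [ae_ne_zero] with φ h0 h
    refine (norm_exp_neg_besselPhase_le (cos_two_mul_sub_pos_of_mem_uIoc ha h h0).le).trans ?_
    have := mul_pos (Real.exp_pos s) (cos_pos_of_mem_uIoc ha h)
    exact Real.exp_le_one_iff.2 (by linarith)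
  · filter_upwards [ae_ne_zero] with φ h0 h
    exact hl φ h h0

theorem tendsto_integral_vertical_atTop (ha : |a.im| ≤ Real.pi / 4) :
    Tendsto (fun s : ℝ => ∫ φ in (0 : ℝ)..a.im, Complex.exp (-besselPhase a (s + φ * I)))
      atTop (𝓝 0) :=
  tendsto_integral_vertical ha fun _ h h0 => squeeze_zero_norm
    (fun _ => norm_exp_neg_besselPhase_le (cos_two_mul_sub_pos_of_mem_uIoc ha h h0).le)
    (tendsto_exp_neg_exp_mul tendsto_id (cos_pos_of_mem_uIoc ha h))

theorem tendsto_integral_vertical_atBot (ha : |a.im| ≤ Real.pi / 4) :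
    Tendsto (fun s : ℝ => ∫ φ in (0 : ℝ)..a.im, Complex.exp (-besselPhase a (s + φ * I)))
      atBot (𝓝 0) :=
  tendsto_integral_vertical ha fun _ h h0 => squeeze_zero_norm
    (fun _ => norm_exp_neg_besselPhase_le_reflected (cos_pos_of_mem_uIoc ha h).le)
    (tendsto_exp_neg_exp_mul
      (tendsto_atTop_add_const_left _ _ tendsto_neg_atBot_atTop)
      (cos_two_mul_sub_pos_of_mem_uIoc ha h h0))

theorem integrableOn_exp_neg_besselPhase (ha : |a.im| ≤ Real.pi / 4) (L : ℝ) :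
    IntegrableOn (fun s : ℝ => Complex.exp (-besselPhase a s)) (Ioi L) := by
  have hc := continuous_besselPhase a
  refine (integrableOn_exp_mul_Ioi (a := -1) (by norm_num) L).mono'
    (Continuous.aestronglyMeasurable (by fun_prop)) (ae_of_all _ fun s => ?_)
  have h := abs_le.1 ha
  have h1 : 0 ≤ Real.cos (2 * a.im - 0) :=
    Real.cos_nonneg_of_mem_Icc ⟨by linarith, by linarith⟩
  have h2 := norm_exp_neg_besselPhase_le (s := s) h1
  simp only [ofReal_zero, zero_mul, add_zero, Real.cos_zero, mul_one] at h2
  refine h2.trans (Real.exp_le_exp.2 ?_)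
  linarith [Real.add_one_le_exp s]

theorem two_mul_exp_re_pos (ha : |a.im| ≤ Real.pi / 4) : 0 < (2 * Complex.exp a).re := by
  have := abs_le.1 ha
  have := Real.pi_pos
  have := Real.cos_pos_of_mem_Ioo (x := a.im) ⟨by linarith, by linarith⟩
  have := mul_pos (Real.exp_pos a.re) this
  simpa [Complex.exp_re]

theorem exp_neg_besselPhase_shift (a : ℂ) (t : ℝ) :
    Complex.exp (-besselPhase a ((t + a.re : ℝ) + a.im * I)) =
      Complex.exp (-(2 * Complex.exp a) * Real.cosh t) := by
  rw [show ((t + a.re : ℝ) + a.im * I : ℂ) = t + a by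
    rw [ofReal_add, add_assoc, re_add_im], besselPhase_add_self]
  simp

theorem integrable_exp_neg_besselPhase_im (ha : |a.im| ≤ Real.pi / 4) :
    Integrable fun s : ℝ => Complex.exp (-besselPhase a (s + a.im * I)) := by
  have h := (integrable_exp_neg_mul_cosh (two_mul_exp_re_pos ha)).comp_sub_right a.re
  simpa only [← exp_neg_besselPhase_shift, sub_add_cancel] using h

theorem integral_exp_neg_besselPhase_im (ha : |a.im| ≤ Real.pi / 4) :
    ∫ s : ℝ, Complex.exp (-besselPhase a (s + a.im * I)) = 2 * besselK0 (2 * Complex.exp a) := by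
  rw [← integral_exp_neg_mul_cosh (two_mul_exp_re_pos ha),
    ← integral_add_right_eq_self _ a.re]
  simp only [exp_neg_besselPhase_shift]

theorem integral_Ioi_eq_add_vertical (ha : |a.im| ≤ Real.pi / 4) (L : ℝ) :
    (∫ s in Ioi L, Complex.exp (-besselPhase a s)) =
      (∫ s in Ioi L, Complex.exp (-besselPhase a (s + a.im * I))) +
        I * ∫ φ in (0 : ℝ)..a.im, Complex.exp (-besselPhase a (L + φ * I)) := by
  have h1 := intervalIntegral_tendsto_integral_Ioi L (integrableOn_exp_neg_besselPhase ha L)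
    tendsto_id
  have h2 := intervalIntegral_tendsto_integral_Ioi L
    (integrable_exp_neg_besselPhase_im ha).integrableOn tendsto_id
  have h3 := (tendsto_integral_vertical_atTop ha).const_mul I
  have h := ((h1.sub h2).add h3).sub_const
    (I * ∫ φ in (0 : ℝ)..a.im, Complex.exp (-besselPhase a (L + φ * I)))
  have h0 : ∀ R : ℝ, _ = (0 : ℂ) := fun R =>
    integral_boundary_rect_eq_zero_of_differentiableOn (fun ζ => Complex.exp (-besselPhase a ζ))
      (L : ℂ) (R + a.im * I) (differentiable_exp_neg_besselPhase a).differentiableOn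
  simp only [ofReal_re, ofReal_im, add_re, add_im, mul_re, mul_im, I_re, I_im, mul_zero, mul_one,
    sub_zero, add_zero, zero_add, ofReal_zero, zero_mul, smul_eq_mul] at h0
  simp only [id, h0] at h
  have := tendsto_nhds_unique h tendsto_const_nhds
  linear_combination this

theorem tendsto_integral_Ioi_exp_neg_besselPhase (ha : |a.im| ≤ Real.pi / 4) :
    Tendsto (fun L : ℝ => ∫ s in Ioi L, Complex.exp (-besselPhase a s)) atBot
      (𝓝 (2 * besselK0 (2 * Complex.exp a))) := by
  have h1 := (aecover_Ioi tendsto_id).integral_tendsto_of_countably_generated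
    (integrable_exp_neg_besselPhase_im ha)
  have h2 := h1.add ((tendsto_integral_vertical_atBot ha).const_mul I)
  rw [integral_exp_neg_besselPhase_im ha, mul_zero, add_zero] at h2
  exact h2.congr fun L => (integral_Ioi_eq_add_vertical ha L).symm

end Contour

theorem integral_Ioi_eq_integral_exp_neg_besselPhase (a : ℂ) {ε : ℝ} (hε : 0 < ε) :
    ∫ y in Ioi ε, Complex.exp (-(y : ℂ) - Complex.exp (2 * a) / y) / (y : ℂ) =
      ∫ s in Ioi (Real.log ε), Complex.exp (-besselPhase a s) := by
  have himg : Real.exp '' Ioi (Real.log ε) = Ioi ε := by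
    ext y
    constructor
    · rintro ⟨s, hs, rfl⟩
      exact (Real.log_lt_iff_lt_exp hε).1 hs
    · intro hy
      exact ⟨Real.log y, Real.log_lt_log hε hy, Real.exp_log (hε.trans hy)⟩
  rw [← himg, integral_image_eq_integral_abs_deriv_smul measurableSet_Ioi
    (fun s _ => (Real.hasDerivAt_exp s).hasDerivWithinAt) Real.exp_injective.injOn]
  refine integral_congr_ae (ae_of_all _ fun s => ?_)
  have h0 := Complex.exp_ne_zero (s : ℂ)
  simp only [Real.abs_exp, real_smul, ofReal_exp]
  rw [mul_div_cancel₀ _ h0, besselPhase, Complex.exp_sub (2 * a), neg_add, sub_eq_add_neg]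

theorem stmt18 (x : ℝ) (hx : 0 < x) (u : ℝ) (hu : u ≠ 0) :
    Tendsto
      (fun ε : ℝ => (1 / 2 : ℂ) *
        ∫ y in Set.Ioi ε,
          Complex.exp (-(y : ℂ) - Complex.I * (x : ℂ) ^ 2 * u / (2 * y)) / (y : ℂ))
      (nhdsWithin 0 (Set.Ioi 0))
      (nhds (besselK0 ((x : ℂ) * (2 * Complex.I * u) ^ (1 / 2 : ℂ)))) := by
  have hw : (2 * I * u : ℂ) ≠ 0 := by simp [hu]
  set a : ℂ := (Real.log (x / 2) : ℝ) + Complex.log (2 * I * u) * (1 / 2) with ha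
  have hz : 2 * Complex.exp a = (x : ℂ) * (2 * I * u) ^ (1 / 2 : ℂ) := by
    rw [ha, Complex.exp_add, ← ofReal_exp, Real.exp_log (by positivity),
      Complex.cpow_def_of_ne_zero hw]
    push_cast
    ring
  have hz2 : Complex.exp (2 * a) = I * (x : ℂ) ^ 2 * u / 2 := by
    rw [ha, show 2 * ((Real.log (x / 2) : ℝ) + Complex.log (2 * I * u) * (1 / 2)) =
      ((Real.log (x / 2) : ℝ) : ℂ) + (Real.log (x / 2) : ℝ) + Complex.log (2 * I * u) by ring,
      Complex.exp_add, Complex.exp_add, Complex.exp_log hw, ← ofReal_exp,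
      Real.exp_log (by positivity)]
    push_cast
    ring
  have him : |a.im| ≤ Real.pi / 4 := by
    have h1 : a.im = (2 * I * u : ℂ).arg / 2 := by
      rw [ha, show (1 / 2 : ℂ) = ((1 / 2 : ℝ) : ℂ) by norm_num, add_im, ofReal_im, im_mul_ofReal,
        Complex.log_im]
      ring
    have h2 : |(2 * I * u : ℂ).arg| ≤ Real.pi / 2 :=
      Complex.abs_arg_le_pi_div_two_iff.2 (by simp)
    rw [h1, abs_div, abs_two]
    linarith
  have h := ((tendsto_integral_Ioi_exp_neg_besselPhase him).comp
    Real.tendsto_log_nhdsGT_zero).const_mul (1 / 2 : ℂ)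
  rw [hz, ← mul_assoc, one_div_mul_cancel two_ne_zero, one_mul] at h
  refine h.congr' ?_
  filter_upwards [self_mem_nhdsWithin] with ε hε
  rw [Function.comp_apply, ← integral_Ioi_eq_integral_exp_neg_besselPhase a hε, hz2]
  simp only [div_div]
end
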